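/- arXiv:1412.4572 — 2 statements merged into one kernel-verified Lean document; each statement's English description precedes it below -/
import Mathlib

section
/- Let G and H be finitely presented groups which are quasi-isometric. Then G has decidable domino problem if and only if H has decidable domino problem. -/
/-- The Cayley graph of a group with respect to a (symmetric) set `S`:
`g` and `g'` are adjacent when they differ by right multiplication by an element of `S`. -/
def cayley {G : Type*} [Group G] (S : Set G) : SimpleGraph G :=
  SimpleGraph.fromRel (fun g g' => g⁻¹ * g' ∈ S)

/-- `f : G → H` is a quasi-isometry for the word metrics: for some `n > 0` it is an
`n`-quasi-isometric embedding and `n`-quasi-surjective. -/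
def IsQI {G H : Type*} [Group G] [Group H] (S : Set G) (T : Set H) (f : G → H) : Prop :=
  ∃ n : ℕ, 0 < n ∧
    (∀ x y : G,
      ((cayley S).dist x y : ℝ) / n - n ≤ ((cayley T).dist (f x) (f y) : ℝ) ∧
      ((cayley T).dist (f x) (f y) : ℝ) ≤ n * ((cayley S).dist x y : ℝ) + n) ∧
    (∀ h : H, ∃ g : G, (cayley T).dist (f g) h ≤ n)

/-- The finite symmetric generating set of `G` determined by a marking
`π : FreeGroup (Fin m) →* G`: the images of the `m` generators and their inverses. -/
def markedGens {G : Type*} [Group G] {m : ℕ} (π : FreeGroup (Fin m) →* G) : Set G :=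
  {x : G | ∃ i : Fin m, x = π (FreeGroup.of i) ∨ x = (π (FreeGroup.of i))⁻¹}

/-- The subshift of finite type on alphabet `Fin k` defined by an encoded list of forbidden
patterns: each pattern is a finite list of pairs (word over the `m` marked generators and
their inverses, color).  A configuration `σ : G → Fin k` belongs to the subshift when at
every `g ∈ G`, every pattern fails at some of its entries: the value of `σ` at the point
`g · (element represented by the word q.1)` differs from the prescribed color `q.2`. -/
def dominoSet {G : Type*} [Group G] {m : ℕ} (π : FreeGroup (Fin m) →* G) (k : ℕ)
    (P : List (List (List (Fin m × Bool) × ℕ))) : Set (G → Fin k) :=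
  {σ : G → Fin k | ∀ g : G, ∀ p ∈ P, ∃ q ∈ p,
    ((σ (g * π (FreeGroup.mk q.1)) : Fin k) : ℕ) ≠ q.2}

/-- `G` (with marking `π`) has decidable domino problem: there is an algorithm deciding, on
input an alphabet size `k` and an encoded finite list of forbidden patterns (group elements
given as words in the marked generators), whether the subshift of finite type they define is
empty. -/
def HasDecidableDomino {G : Type*} [Group G] {m : ℕ}
    (π : FreeGroup (Fin m) →* G) : Prop :=
  ComputablePred (fun I : ℕ × List (List (List (Fin m × Bool) × ℕ)) =>
    dominoSet π I.1 I.2 = ∅)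

/-!
A quasi-isometry `H → G` has bounded fibres, so recording a position within the fibre turns it into
an injection `e : H → G × Fin n` that moves each generator of `H` along a bounded word of `G`. Hence
a configuration over `H` can be written on `G`: the point `g` carries, for each `(g, i)` in the
image of `e`, the colour of its preimage and the moves that the generators of `H` make from there.

Conversely, suppose that arbitrary such data on `G` is active within bounded distance of every point
and that following a relator of `H` through the prescribed moves always leads back. The second
condition is local because `H` is finitely presented. The moves then define an action of `H` on
`G × Fin n`, and reading the colours along the orbit of an active state gives a configuration over
`H`, although the orbit map need not be `e` nor even injective. So a domino instance over `H` has a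
solution if and only if a subshift of finite type over `G`, computable from the instance, is
nonempty. Since a quasi-isometry has a quasi-inverse, the roles of `G` and `H` can be exchanged.
-/

/-- Words in the letters `(i, true)`, standing for the `i`-th generator, and `(i, false)`, standing
for its inverse. -/
abbrev Word (m : ℕ) := List (Fin m × Bool)

/-- Patterns as they are encoded in `dominoSet`: finite lists of prescribed colours. -/
abbrev Pattern (m : ℕ) := List (Word m × ℕ)

/-! ### Primitive recursion -/

section Primrec

variable {α : Type*} [Primcodable α]

theorem primrec_nat_pow : Primrec₂ ((· ^ ·) : ℕ → ℕ → ℕ) :=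
  Primrec₂.unpaired'.1 Nat.Primrec.pow

theorem primrec_list_sections : Primrec (List.sections (α := α)) := by
  have h : Primrec fun L : List (List α) =>
      L.foldr (fun l acc => acc.flatMap fun s => l.map fun a => a :: s) [[]] := by
    refine Primrec.list_foldr (h := fun _ (x : List α × List (List α)) =>
      x.2.flatMap fun s => x.1.map fun a => a :: s) Primrec.id (Primrec.const [[]]) ?_
    refine Primrec.list_flatMap (Primrec.snd.comp Primrec.snd) ?_
    refine Primrec.list_map (Primrec.fst.comp (Primrec.snd.comp Primrec.fst)) ?_
    exact Primrec.list_cons.comp Primrec.snd (Primrec.snd.comp Primrec.fst)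
  refine h.of_eq fun L => ?_
  induction L with
  | nil => rfl
  | cons l L ih => rw [List.foldr_cons, ih, List.sections]

theorem primrecPred_forall_of_finite {ι : Type*} [Finite ι] {R : α → ι → Prop}
    (hR : ∀ i, PrimrecPred fun a => R a i) : PrimrecPred fun a => ∀ i, R a i := by
  have hset : ∀ s : Set ι, s.Finite → PrimrecPred fun a => ∀ i ∈ s, R a i := fun s hs => by
    induction s, hs using Set.Finite.induction_on with
    | empty =>
      have htrue : PrimrecPred fun _ : α => True := ⟨fun _ => .isTrue trivial, Primrec.const true⟩
      exact htrue.of_eq fun a => by simp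
    | @insert i _ _ _ ih => exact ((hR i).and ih).of_eq fun a => by simp
  exact (hset Set.univ Set.finite_univ).of_eq fun a => by simp

theorem primrecPred_exists_of_finite {ι : Type*} [Finite ι] {R : α → ι → Prop}
    (hR : ∀ i, PrimrecPred fun a => R a i) : PrimrecPred fun a => ∃ i, R a i :=
  (primrecPred_forall_of_finite fun i => (hR i).not).not.of_eq fun a => by simp

theorem primrecPred_mem_of_finite {s : Set α} (hs : s.Finite) : PrimrecPred fun a => a ∈ s :=
  have := hs.to_subtype
  (primrecPred_exists_of_finite fun b : s => Primrec.eq.comp Primrec.id (Primrec.const b.1)).of_eq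
    fun a => by simp

end Primrec

/-! ### Local rules -/

section LocalRules

variable {m : ℕ}

/-- The colour that a pattern prescribes at a word, with the junk value `0` at the words outside
its support. -/
def Pattern.read (p : Pattern m) (w : Word m) : ℕ :=
  p.foldr (fun q κ => if w = q.1 then q.2 else κ) 0

theorem Pattern.primrec_read : Primrec₂ (Pattern.read (m := m)) := by
  refine Primrec.list_foldr (h := fun (x : Pattern m × Word m) (y : (Word m × ℕ) × ℕ) =>
    if x.2 = y.1.1 then y.1.2 else y.2) Primrec.fst (Primrec.const 0) ?_
  have hentry : Primrec fun x : (Pattern m × Word m) × (Word m × ℕ) × ℕ => x.2.1 :=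
    Primrec.fst.comp Primrec.snd
  exact Primrec.ite
    (Primrec.eq.comp (Primrec.snd.comp Primrec.fst) (Primrec.fst.comp hentry))
    (Primrec.snd.comp hentry) (Primrec.snd.comp Primrec.snd)

theorem Pattern.read_map_prodMk (c : Word m → ℕ) {W : List (Word m)} {w : Word m} (hw : w ∈ W) :
    Pattern.read (W.map fun v => (v, c v)) w = c w := by
  induction W with
  | nil => simp at hw
  | cons v W ih =>
    by_cases h : w = v
    · simp [Pattern.read, h]
    · simpa [Pattern.read, h] using ih (List.mem_of_ne_of_mem h hw)

/-- All patterns with support `W` and colours less than `K`. -/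
def patternsOn (K : ℕ) (W : List (Word m)) : List (Pattern m) :=
  (W.map fun w => (List.range K).map fun κ => (w, κ)).sections

theorem primrec_patternsOn : Primrec₂ (patternsOn (m := m)) := by
  refine primrec_list_sections.comp (Primrec.list_map Primrec.snd ?_)
  refine Primrec.list_map (Primrec.list_range.comp (Primrec.fst.comp Primrec.fst)) ?_
  exact (Primrec.snd.comp Primrec.fst).pair Primrec.snd

theorem mem_patternsOn_and_eq_iff {K : ℕ} {c : Word m → ℕ} (hc : ∀ w, c w < K)
    {W : List (Word m)} {p : Pattern m} :
    (p ∈ patternsOn K W ∧ ∀ q ∈ p, c q.1 = q.2) ↔ p = W.map fun w => (w, c w) := by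
  rw [patternsOn, List.mem_sections]
  induction W generalizing p with
  | nil => simp +contextual
  | cons w W ih =>
    cases p with
    | nil => simp
    | cons q p =>
      have hq : (∃ κ, κ < K ∧ (w, κ) = q) ∧ c q.1 = q.2 ↔ q = (w, c w) := by
        constructor
        · rintro ⟨⟨κ, -, rfl⟩, h⟩
          exact Prod.ext rfl h.symm
        · rintro rfl
          exact ⟨⟨c w, hc w, rfl⟩, rfl⟩
      simp only [List.map_cons, List.forall₂_cons, List.forall_mem_cons, List.cons.injEq, ← ih,
        ← hq, List.mem_map, List.mem_range]
      tauto

/-- An enumeration of the words of length at most `r`. -/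
noncomputable def wordsUpTo (m : ℕ) : ℕ → List (Word m)
  | 0 => [[]]
  | r + 1 => [] :: (wordsUpTo m r).flatMap fun w => Finset.univ.toList.map fun t => t :: w

theorem mem_wordsUpTo {r : ℕ} {w : Word m} : w ∈ wordsUpTo m r ↔ w.length ≤ r := by
  induction r generalizing w with
  | zero => simp [wordsUpTo]
  | succ r ih => cases w <;> simp [wordsUpTo, ih]

theorem primrec_wordsUpTo : Primrec (wordsUpTo m) := by
  have h : Primrec (Nat.rec [[]] fun _ W =>
      [] :: W.flatMap fun w => Finset.univ.toList.map fun t => t :: w : ℕ → List (Word m)) := by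
    refine Primrec.nat_rec₁ [[]] (Primrec.list_cons.comp (Primrec.const []) ?_)
    refine Primrec.list_flatMap Primrec.snd (Primrec.list_map (Primrec.const _) ?_)
    exact Primrec.list_cons.comp Primrec.snd (Primrec.snd.comp Primrec.fst)
  refine h.of_eq fun r => ?_
  induction r with
  | zero => rfl
  | succ r ih => simp only [wordsUpTo, ← ih]

variable {G A : Type*} [Group G]

/-- A configuration as seen from the point `g`: the colours it shows along words. -/
def view (π : FreeGroup (Fin m) →* G) (σ : G → A) (g : G) (w : Word m) : A :=
  σ (g * π (FreeGroup.mk w))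

/-- A property of colourings of words that only depends on the words of length at most `r`. -/
def IsLocal (r : ℕ) (F : (Word m → ℕ) → Prop) : Prop :=
  ∀ c c' : Word m → ℕ, (∀ w, w.length ≤ r → c w = c' w) → F c → F c'

open Classical in
/-- The forbidden patterns expressing a local rule of radius `r` over `K` colours. -/
noncomputable def forbiddenPatterns (K r : ℕ) (F : (Word m → ℕ) → Prop) : List (Pattern m) :=
  (patternsOn K (wordsUpTo m r)).filter fun p => ¬ F p.read

theorem mem_dominoSet_forbiddenPatterns (π : FreeGroup (Fin m) →* G) {K r : ℕ}
    {F : (Word m → ℕ) → Prop} (hF : IsLocal r F) {σ : G → Fin K} :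
    σ ∈ dominoSet π K (forbiddenPatterns K r F) ↔ ∀ g, F (view π (fun g => (σ g : ℕ)) g) := by
  refine forall_congr' fun g => ?_
  set c := view π (fun g => (σ g : ℕ)) g
  set p₀ : Pattern m := (wordsUpTo m r).map fun w => (w, c w)
  have hread : ∀ w : Word m, w.length ≤ r → p₀.read w = c w := fun w hw =>
    Pattern.read_map_prodMk c (mem_wordsUpTo.2 hw)
  have hp₀ : F p₀.read ↔ F c := ⟨hF _ _ hread, hF _ _ fun w hw => (hread w hw).symm⟩
  have hmatch : ∀ p, (p ∈ patternsOn K (wordsUpTo m r) ∧ ∀ q ∈ p, c q.1 = q.2) ↔ p = p₀ :=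
    fun p => mem_patternsOn_and_eq_iff (c := c) fun w => (σ _).2
  calc (∀ p ∈ forbiddenPatterns K r F, ∃ q ∈ p, c q.1 ≠ q.2)
    _ ↔ ∀ p, (p ∈ patternsOn K (wordsUpTo m r) ∧ ∀ q ∈ p, c q.1 = q.2) → F p.read := by
      refine forall_congr' fun p => ?_
      simp only [forbiddenPatterns, List.mem_filter, decide_eq_true_eq]
      grind
    _ ↔ F c := by simp only [hmatch, forall_eq, hp₀]

theorem primrec_forbiddenPatterns {α : Type*} [Primcodable α] {K r : α → ℕ}
    {F : α → (Word m → ℕ) → Prop} (hK : Primrec K) (hr : Primrec r)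
    (hF : PrimrecRel fun x (p : Pattern m) => F x p.read) :
    Primrec fun x => forbiddenPatterns (K x) (r x) (F x) := by
  classical
  exact hF.not.swap.listFilter.comp
    (primrec_patternsOn.comp hK (primrec_wordsUpTo.comp hr)) Primrec.id

theorem HasDecidableDomino.computablePred_localRule {π : FreeGroup (Fin m) →* G}
    (h : HasDecidableDomino π) {α : Type*} [Primcodable α] {K r : α → ℕ}
    {F : α → (Word m → ℕ) → Prop} (hK : Primrec K) (hr : Primrec r)
    (hF : PrimrecRel fun x (p : Pattern m) => F x p.read) (hlocal : ∀ x, IsLocal (r x) (F x)) :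
    ComputablePred fun x =>
      {σ : G → Fin (K x) | ∀ g, F x (view π (fun g => (σ g : ℕ)) g)} = ∅ := by
  refine ComputablePred.computable_of_manyOneReducible ⟨fun x =>
    (K x, forbiddenPatterns (K x) (r x) (F x)),
    (hK.pair (primrec_forbiddenPatterns hK hr hF)).to_comp, fun x => ?_⟩ h
  exact iff_of_eq (congrArg (· = ∅) (Set.ext fun σ =>
    (mem_dominoSet_forbiddenPatterns π (hlocal x)).symm))

end LocalRules

/-! ### Orbit maps from relators -/

section RelatorSet

variable {α X H : Type*} [Group H] {π : FreeGroup α →* H} {R : Set (List (α × Bool))}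

/-- The words in `R` are the relators of a presentation of `H`, the generators being given by `π`.
The words `a a⁻¹` and `a⁻¹ a` are required to be among them, so that `R` also presents `H` as a
monoid. -/
structure IsRelatorSet (π : FreeGroup α →* H) (R : Set (List (α × Bool))) : Prop where
  map_mk_eq_one : ∀ r ∈ R, π (FreeGroup.mk r) = 1
  cancel_mem : ∀ a b, [(a, b), (a, !b)] ∈ R
  ker_le : π.ker ≤ Subgroup.normalClosure (FreeGroup.mk '' R)

theorem exists_finite_isRelatorSet [Finite α] {S : Set (FreeGroup α)} (hS : S.Finite)
    (hker : π.ker = Subgroup.normalClosure S) :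
    ∃ R : Set (List (α × Bool)), R.Finite ∧ IsRelatorSet π R := by
  have hmk : Function.Surjective (FreeGroup.mk (α := α)) := Quot.exists_rep
  let C : Set (List (α × Bool)) := Set.range fun t : α × Bool => [t, (t.1, !t.2)]
  refine ⟨Function.surjInv hmk '' S ∪ C, (hS.image _).union (Set.finite_range _), ?_, ?_, ?_⟩
  · rintro _ (⟨s, hs, rfl⟩ | ⟨⟨a, b⟩, rfl⟩)
    · rw [Function.surjInv_eq hmk, ← MonoidHom.mem_ker, hker]
      exact Subgroup.subset_normalClosure hs
    · have hcancel : FreeGroup.mk [(a, b), (a, !b)] = 1 := Quot.sound FreeGroup.Red.Step.cons_not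
      simp only [hcancel, map_one]
  · exact fun a b => Or.inr ⟨(a, b), rfl⟩
  · rw [hker]
    exact Subgroup.normalClosure_mono fun s hs =>
      ⟨Function.surjInv hmk s, Or.inl ⟨s, hs, rfl⟩, Function.surjInv_eq hmk s⟩

/-- The right action of the free group on `X` in which the letter `t` acts by `x ↦ step x t`. It is
a right action because reading a word from left to right applies its first letter first. -/
def stepHom (step : X → α × Bool → X) (hstep : ∀ x a b, step (step x (a, b)) (a, !b) = x) :
    FreeGroup α →* (Equiv.Perm X)ᵐᵒᵖ :=
  FreeGroup.lift fun a => MulOpposite.op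
    ⟨(step · (a, true)), (step · (a, false)), (hstep · a true), (hstep · a false)⟩

theorem unop_stepHom_mk {step : X → α × Bool → X}
    (hstep : ∀ x a b, step (step x (a, b)) (a, !b) = x) (w : List (α × Bool)) (x : X) :
    (stepHom step hstep (FreeGroup.mk w)).unop x = w.foldl step x := by
  induction w generalizing x with
  | nil => simp [stepHom]
  | cons t w ih =>
    obtain ⟨a, b⟩ := t
    rw [List.foldl_cons, ← ih]
    cases b <;> simp [stepHom, FreeGroup.lift_mk]

theorem IsRelatorSet.exists_orbitMap (hR : IsRelatorSet π R) (hπ : Function.Surjective π)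
    {step : X → α × Bool → X} (hstep : ∀ r ∈ R, ∀ x, r.foldl step x = x) (x₀ : X) :
    ∃ orbit : H → X, orbit 1 = x₀ ∧
      ∀ h w, orbit (h * π (FreeGroup.mk w)) = w.foldl step (orbit h) := by
  have hcancel : ∀ x a b, step (step x (a, b)) (a, !b) = x := fun x a b =>
    hstep _ (hR.cancel_mem a b) x
  have hker : π.ker ≤ (stepHom step hcancel).ker := by
    refine hR.ker_le.trans (Subgroup.normalClosure_le_normal ?_)
    rintro _ ⟨r, hr, rfl⟩
    exact MulOpposite.unop_injective <| Equiv.ext fun x =>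
      (unop_stepHom_mk hcancel r x).trans (hstep r hr x)
  let Φ : H →* (Equiv.Perm X)ᵐᵒᵖ := π.liftOfSurjective hπ ⟨stepHom step hcancel, hker⟩
  have hΦ : ∀ w, Φ (π (FreeGroup.mk w)) = stepHom step hcancel (FreeGroup.mk w) := fun w =>
    π.liftOfRightInverse_comp_apply _ _ ⟨_, hker⟩ (FreeGroup.mk w)
  refine ⟨fun h => (Φ h).unop x₀, by simp, fun h w => ?_⟩
  rw [← unop_stepHom_mk hcancel, ← hΦ]
  exact DFunLike.congr_fun (congrArg MulOpposite.unop (map_mul Φ h _)) x₀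

end RelatorSet

/-! ### Simulating configurations -/

section Simulation

variable {mG mH n N : ℕ} {G H : Type*} [Group G] [Group H]

instance {m : ℕ} : Finite {w : Word m // w.length ≤ N} :=
  List.finite_length_le _ N

/-- What is written at a point of `G` to let `G × Fin n` carry a partial right action of `H`. The
state `i : Fin n` is inactive when its label is `none`; otherwise the label sends a generator `t` of
`H` to a word of length at most `N`, along which to move in `G`, and to the state reached. -/
abbrev Label (mG mH n N : ℕ) :=
  Fin n → Option (Fin mH × Bool → {w : Word mG // w.length ≤ N} × Fin n)

/-- The move prescribed by a label. Inactive states stay put. -/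
def Label.move (ℓ : Label mG mH n N) (i : Fin n) (t : Fin mH × Bool) : Word mG × Fin n :=
  (ℓ i).elim ([], i) fun f => ((f t).1, (f t).2)

theorem Label.length_move_le (ℓ : Label mG mH n N) (i : Fin n) (t : Fin mH × Bool) :
    (ℓ.move i t).1.length ≤ N := by
  unfold Label.move
  cases ℓ i with
  | none => exact Nat.zero_le N
  | some f => exact (f t).1.2

/-- A state is active when its label tells how `H` moves it. -/
def Active {X : Type*} (lab : X → Label mG mH n N) (s : X × Fin n) : Prop :=
  (lab s.1 s.2).isSome

/-- One step of the walk prescribed by the labels `lab` on a set `X` on which words act through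
`act`. -/
def walkStep {X : Type*} (act : X → Word mG → X) (lab : X → Label mG mH n N) (s : X × Fin n)
    (t : Fin mH × Bool) : X × Fin n :=
  (act s.1 ((lab s.1).move s.2 t).1, ((lab s.1).move s.2 t).2)

/-- The walk in `G × Fin n` that starts at `s` and follows the letters of a word over the generators
of `H`. -/
def walk (π : FreeGroup (Fin mG) →* G) (lab : G → Label mG mH n N) (s : G × Fin n) (w : Word mH) :
    G × Fin n :=
  w.foldl (walkStep (fun g v => g * π (FreeGroup.mk v)) lab) s

/-- The walk as it is computed by an observer at its starting point, who only knows the labels along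
words: positions are recorded as words over the generators of `G`. -/
def wordWalk (lab : Word mG → Label mG mH n N) (i : Fin n) (w : Word mH) : Word mG × Fin n :=
  w.foldl (walkStep (· ++ ·) lab) ([], i)

theorem walk_cons (π : FreeGroup (Fin mG) →* G) (lab : G → Label mG mH n N) (s : G × Fin n)
    (t : Fin mH × Bool) (w : Word mH) : walk π lab s (t :: w) = walk π lab (walk π lab s [t]) w :=
  rfl

theorem walk_eq_wordWalk (π : FreeGroup (Fin mG) →* G) (lab : G → Label mG mH n N) (g : G)
    (i : Fin n) (w : Word mH) :
    walk π lab (g, i) w = (g * π (FreeGroup.mk (wordWalk (view π lab g) i w).1),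
      (wordWalk (view π lab g) i w).2) := by
  have hstep : ∀ (s : Word mG × Fin n) (t : Fin mH × Bool),
      walkStep (fun g v => g * π (FreeGroup.mk v)) lab (g * π (FreeGroup.mk s.1), s.2) t =
        (g * π (FreeGroup.mk (walkStep (· ++ ·) (view π lab g) s t).1),
          (walkStep (· ++ ·) (view π lab g) s t).2) := fun s t => by
    simp only [walkStep, view, ← FreeGroup.mul_mk, map_mul, mul_assoc]
  have h := List.foldl_hom (fun s : Word mG × Fin n => (g * π (FreeGroup.mk s.1), s.2))
    (l := w) (init := ([], i)) hstep
  rwa [← FreeGroup.one_eq_mk, map_one, mul_one] at h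

theorem wordWalk_append_singleton (lab : Word mG → Label mG mH n N) (i : Fin n) (w : Word mH)
    (t : Fin mH × Bool) :
    wordWalk lab i (w ++ [t]) = walkStep (· ++ ·) lab (wordWalk lab i w) t :=
  List.foldl_append

theorem length_wordWalk_le (lab : Word mG → Label mG mH n N) (i : Fin n) (w : Word mH) :
    (wordWalk lab i w).1.length ≤ N * w.length := by
  induction w using List.reverseRecOn with
  | nil => simp [wordWalk]
  | append_singleton w t ih =>
    have := (lab (wordWalk lab i w).1).length_move_le (wordWalk lab i w).2 t
    simp only [wordWalk_append_singleton, walkStep, List.length_append, List.length_singleton,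
      mul_add_one]
    lia

theorem wordWalk_congr {lab lab' : Word mG → Label mG mH n N} (i : Fin n) {w : Word mH}
    (h : ∀ v : Word mG, v.length ≤ N * w.length → lab v = lab' v) :
    wordWalk lab i w = wordWalk lab' i w := by
  induction w using List.reverseRecOn with
  | nil => rfl
  | append_singleton w t ih =>
    have hw : N * w.length ≤ N * (w ++ [t]).length := by gcongr; simp
    rw [wordWalk_append_singleton, wordWalk_append_singleton, ← ih fun v hv => h v (hv.trans hw),
      walkStep, walkStep, h _ ((length_wordWalk_le lab i w).trans hw)]

/-- The labels `lab` and the tiles `tile` on `G × Fin n` describe a configuration over `H` that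
avoids the patterns `P`. The set `R` stands for the relators of `H`. -/
structure Simulates (π : FreeGroup (Fin mG) →* G) (R : Set (Word mH)) (P : List (Pattern mH))
    (lab : G → Label mG mH n N) (tile : G → Fin n → ℕ) : Prop where
  exists_active : ∀ g, ∃ v : {v : Word mG // v.length ≤ N}, ∃ i,
    Active lab (g * π (FreeGroup.mk v.1), i)
  active_walk : ∀ s, Active lab s → ∀ t, Active lab (walk π lab s [t])
  walk_relator : ∀ r ∈ R, ∀ s, walk π lab s r = s
  avoids : ∀ s, Active lab s → ∀ p ∈ P, ∃ q ∈ p,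
    tile (walk π lab s q.1).1 (walk π lab s q.1).2 ≠ q.2

/-- The condition `Simulates` at a single point of `G`, read off the labels and tiles seen from that
point. -/
def LocalRule (π : FreeGroup (Fin mG) →* G) (R : Set (Word mH)) (P : List (Pattern mH))
    (lab : Word mG → Label mG mH n N) (tile : Word mG → Fin n → ℕ) : Prop :=
  (∃ v : {v : Word mG // v.length ≤ N}, ∃ i, Active lab (v.1, i)) ∧
  (∀ i, Active lab ([], i) → ∀ t, Active lab (wordWalk lab i [t])) ∧
  (∀ r ∈ R, ∀ i, π (FreeGroup.mk (wordWalk lab i r).1) = 1 ∧ (wordWalk lab i r).2 = i) ∧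
  (∀ i, Active lab ([], i) → ∀ p ∈ P, ∃ q ∈ p,
    tile (wordWalk lab i q.1).1 (wordWalk lab i q.1).2 ≠ q.2)

variable {πG : FreeGroup (Fin mG) →* G} {πH : FreeGroup (Fin mH) →* H} {R : Set (Word mH)}
  {P : List (Pattern mH)}

theorem forall_localRule_view_iff {lab : G → Label mG mH n N} {tile : G → Fin n → ℕ} :
    (∀ g, LocalRule πG R P (view πG lab g) (view πG tile g)) ↔ Simulates πG R P lab tile := by
  have hnil : ∀ g i, Active (view πG lab g) ([], i) ↔ Active lab (g, i) := fun g i => by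
    rw [Active, Active, view, ← FreeGroup.one_eq_mk, map_one, mul_one]
  constructor
  · intro h
    refine ⟨fun g => (h g).1, fun (g, i) hs t => ?_, fun r hr (g, i) => ?_,
      fun (g, i) hs p hp => ?_⟩
    · rw [walk_eq_wordWalk]
      exact (h g).2.1 i ((hnil g i).2 hs) t
    · rw [walk_eq_wordWalk, Prod.ext_iff, mul_eq_left]
      exact (h g).2.2.1 r hr i
    · simp only [walk_eq_wordWalk]
      exact (h g).2.2.2 i ((hnil g i).2 hs) p hp
  · intro h g
    refine ⟨h.exists_active g, fun i hs t => ?_, fun r hr i => ?_, fun i hs p hp => ?_⟩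
    · have hactive := h.active_walk (g, i) ((hnil g i).1 hs) t
      rwa [walk_eq_wordWalk] at hactive
    · simpa only [walk_eq_wordWalk, Prod.ext_iff, mul_eq_left] using h.walk_relator r hr (g, i)
    · have havoids := h.avoids (g, i) ((hnil g i).1 hs) p hp
      simp only [walk_eq_wordWalk] at havoids
      exact havoids

theorem LocalRule.congr {r : ℕ} {lab lab' : Word mG → Label mG mH n N}
    {tile tile' : Word mG → Fin n → ℕ} (h : LocalRule πG R P lab tile)
    (hlab : ∀ w : Word mG, w.length ≤ r → lab w = lab' w)
    (htile : ∀ w : Word mG, w.length ≤ r → tile w = tile' w)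
    (hN : N ≤ r) (hR : ∀ w ∈ R, N * w.length ≤ r) (hP : ∀ p ∈ P, ∀ q ∈ p, N * q.1.length ≤ r) :
    LocalRule πG R P lab' tile' := by
  have hactive : ∀ s : Word mG × Fin n, s.1.length ≤ r → (Active lab' s ↔ Active lab s) :=
    fun s hs => by rw [Active, Active, hlab _ hs]
  have hwalk : ∀ (i : Fin n) (w : Word mH), N * w.length ≤ r →
      wordWalk lab' i w = wordWalk lab i w := fun i w hw =>
    (wordWalk_congr i fun v hv => hlab v (hv.trans hw)).symm
  have hlength : ∀ (i : Fin n) (w : Word mH), N * w.length ≤ r →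
      (wordWalk lab i w).1.length ≤ r := fun i w hw => (length_wordWalk_le lab i w).trans hw
  obtain ⟨⟨v, i, hv⟩, hact, hrel, havoid⟩ := h
  refine ⟨⟨v, i, (hactive _ (v.2.trans hN)).2 hv⟩, fun i hi t => ?_, fun w hw i => ?_,
    fun i hi p hp => ?_⟩
  · have ht : N * [t].length ≤ r := by simpa using hN
    rw [hwalk i _ ht, hactive _ (hlength i _ ht)]
    exact hact i ((hactive ([], i) (Nat.zero_le r)).1 hi) t
  · rw [hwalk i w (hR w hw)]
    exact hrel w hw i
  · obtain ⟨q, hq, hne⟩ := havoid i ((hactive ([], i) (Nat.zero_le r)).1 hi) p hp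
    refine ⟨q, hq, ?_⟩
    rwa [hwalk i _ (hP p hp q hq), ← htile _ (hlength i _ (hP p hp q hq))]

theorem Simulates.dominoSet_nonempty {k : ℕ} {lab : G → Label mG mH n N} {τ : G → Fin n → Fin k}
    (h : Simulates πG R P lab fun g i => (τ g i : ℕ)) (hπH : Function.Surjective πH)
    (hR : IsRelatorSet πH R) : (dominoSet πH k P).Nonempty := by
  obtain ⟨v, i, hv⟩ := h.exists_active 1
  obtain ⟨orbit, horbit_one, horbit⟩ := hR.exists_orbitMap hπH h.walk_relator
    (1 * πG (FreeGroup.mk v.1), i)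
  have hactive : ∀ w : Word mH, Active lab (orbit (πH (FreeGroup.mk w))) := fun w => by
    induction w using List.reverseRecOn with
    | nil => rwa [← FreeGroup.one_eq_mk, map_one, horbit_one]
    | append_singleton w t ih =>
      rw [← FreeGroup.mul_mk, map_mul, horbit]
      exact h.active_walk _ ih t
  refine ⟨fun x => τ (orbit x).1 (orbit x).2, fun x p hp => ?_⟩
  obtain ⟨⟨w⟩, rfl⟩ := hπH x
  obtain ⟨q, hq, hne⟩ := h.avoids _ (hactive w) p hp
  refine ⟨q, hq, ?_⟩
  dsimp only
  rw [horbit]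
  exact hne

theorem walk_of_not_active {lab : G → Label mG mH n N} {s : G × Fin n} (hs : ¬ Active lab s)
    (w : Word mH) : walk πG lab s w = s := by
  have hnone : lab s.1 s.2 = none := by simpa [Active] using hs
  induction w with
  | nil => rfl
  | cons t w ih =>
    have hstep : walk πG lab s [t] = s := by
      simp [walk, walkStep, Label.move, hnone, ← FreeGroup.one_eq_mk]
    rw [walk_cons, hstep, ih]

theorem exists_label {e : H → G × Fin n} (he : Function.Injective e)
    (hstep : ∀ h t, ∃ w : Word mG, w.length ≤ N ∧
      (e (h * πH (FreeGroup.mk [t]))).1 = (e h).1 * πG (FreeGroup.mk w)) :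
    ∃ lab : G → Label mG mH n N, (∀ s, Active lab s ↔ s ∈ Set.range e) ∧
      ∀ h w, walk πG lab (e h) w = e (h * πH (FreeGroup.mk w)) := by
  choose w hw hmove using hstep
  let lab : G → Label mG mH n N := fun g i => Function.extend e
    (fun h => some fun t => (⟨w h t, hw h t⟩, (e (h * πH (FreeGroup.mk [t]))).2))
    (fun _ => none) (g, i)
  have hlab : ∀ h, lab (e h).1 (e h).2 = some fun t =>
      (⟨w h t, hw h t⟩, (e (h * πH (FreeGroup.mk [t]))).2) := fun h => he.extend_apply ..
  refine ⟨lab, fun s => ⟨?_, ?_⟩, fun h v => ?_⟩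
  · contrapose!
    intro hs
    have hnone : lab s.1 s.2 = none := Function.extend_apply' _ _ s hs
    simp [Active, hnone]
  · rintro ⟨h, rfl⟩
    simp [Active, hlab]
  · induction v generalizing h with
    | nil => simp [walk, ← FreeGroup.one_eq_mk]
    | cons t v ih =>
      have ht : walk πG lab (e h) [t] = e (h * πH (FreeGroup.mk [t])) := by
        simp [walk, walkStep, Label.move, hlab, ← hmove]
      rw [walk_cons, ht, ih, mul_assoc, ← map_mul, FreeGroup.mul_mk, List.singleton_append]

theorem exists_simulates {k : ℕ} {e : H → G × Fin n} (he : Function.Injective e)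
    (hstep : ∀ h t, ∃ w : Word mG, w.length ≤ N ∧
      (e (h * πH (FreeGroup.mk [t]))).1 = (e h).1 * πG (FreeGroup.mk w))
    (hdense : ∀ g, ∃ h, ∃ w : Word mG, w.length ≤ N ∧ (e h).1 = g * πG (FreeGroup.mk w))
    (hR : ∀ r ∈ R, πH (FreeGroup.mk r) = 1) {x : H → Fin k} (hx : x ∈ dominoSet πH k P) :
    ∃ (lab : G → Label mG mH n N) (τ : G → Fin n → Fin k),
      Simulates πG R P lab fun g i => (τ g i : ℕ) := by
  obtain ⟨lab, hactive, hwalk⟩ := exists_label he hstep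
  let τ : G → Fin n → Fin k := fun g i => Function.extend e x (fun _ => x 1) (g, i)
  have hτ : ∀ h, τ (e h).1 (e h).2 = x h := fun h => he.extend_apply ..
  refine ⟨lab, τ, fun g => ?_, fun s hs t => ?_, fun r hr s => ?_, fun s hs p hp => ?_⟩
  · obtain ⟨h, w, hw, he⟩ := hdense g
    exact ⟨⟨w, hw⟩, (e h).2, (hactive _).2 ⟨h, by rw [← he]⟩⟩
  · obtain ⟨h, rfl⟩ := (hactive s).1 hs
    exact (hactive _).2 ⟨_, (hwalk h [t]).symm⟩
  · by_cases hs : Active lab s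
    · obtain ⟨h, rfl⟩ := (hactive s).1 hs
      rw [hwalk, hR r hr, mul_one]
    · exact walk_of_not_active hs r
  · obtain ⟨h, rfl⟩ := (hactive s).1 hs
    obtain ⟨q, hq, hne⟩ := hx h p hp
    exact ⟨q, hq, by rwa [hwalk, hτ]⟩

end Simulation

/-! ### Coding labels and tiles by colours -/

section Coding

variable {mG mH n N : ℕ} {G : Type*} [Group G] {πG : FreeGroup (Fin mG) →* G} {R : Set (Word mH)}

/-- The label coded by a colour, namely by its residue modulo the number of labels. -/
noncomputable def decodeLabel (κ : ℕ) : Label mG mH n N :=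
  (Finite.equivFin _).symm (Fin.ofNat (Nat.card (Label mG mH n N)) κ)

/-- The tile on the state `i` coded by a colour: the quotient of the colour by the number `L` of
labels lists the tiles as digits in base `k`. -/
def decodeTile (L k κ : ℕ) (i : Fin n) : ℕ :=
  κ / L / k ^ (i : ℕ) % k

theorem decodeTile_lt {L k κ : ℕ} (hκ : κ < k ^ n * L) (i : Fin n) : decodeTile L k κ i < k := by
  refine Nat.mod_lt _ (Nat.pos_of_ne_zero ?_)
  rintro rfl
  simp [zero_pow i.pos.ne'] at hκ

theorem exists_decode_eq {k : ℕ} (ℓ : Label mG mH n N) (τ : Fin n → Fin k) :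
    ∃ κ : Fin (k ^ n * Nat.card (Label mG mH n N)), decodeLabel κ = ℓ ∧
      ∀ i, decodeTile (Nat.card (Label mG mH n N)) k κ i = τ i := by
  let L := Nat.card (Label mG mH n N)
  let a : Fin L := Finite.equivFin _ ℓ
  let b : Fin (k ^ n) := finFunctionFinEquiv τ
  refine ⟨finProdFinEquiv (b, a), ?_, fun i => ?_⟩
  · have ha : Fin.ofNat L (finProdFinEquiv (b, a)) = a := Fin.ext <| by
      simp [Nat.mod_eq_of_lt a.2]
    exact (congrArg (Finite.equivFin _).symm ha).trans (Equiv.symm_apply_apply _ ℓ)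
  · have hb : (finProdFinEquiv (b, a) : ℕ) / L = b := by
      simp [Nat.add_mul_div_left _ _ a.pos, Nat.div_eq_of_lt a.2]
    rw [decodeTile, hb, ← finFunctionFinEquiv_symm_apply_val, Equiv.symm_apply_apply]

/-- The condition on the colouring seen from a point of `G` that makes the coded labels and tiles
simulate a configuration over `H` for the domino instance `I`. -/
def SimulationRule (π : FreeGroup (Fin mG) →* G) (R : Set (Word mH)) (n N : ℕ)
    (I : ℕ × List (Pattern mH)) (c : Word mG → ℕ) : Prop :=
  LocalRule (n := n) (N := N) π R I.2 (fun w => decodeLabel (c w))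
    fun w => decodeTile (Nat.card (Label mG mH n N)) I.1 (c w)

theorem exists_simulationRule_iff {k : ℕ} {P : List (Pattern mH)} :
    (∃ σ : G → Fin (k ^ n * Nat.card (Label mG mH n N)),
      ∀ g, SimulationRule πG R n N (k, P) (view πG (fun g => (σ g : ℕ)) g)) ↔
    ∃ (lab : G → Label mG mH n N) (τ : G → Fin n → Fin k),
      Simulates πG R P lab fun g i => (τ g i : ℕ) := by
  constructor
  · rintro ⟨σ, hσ⟩
    exact ⟨fun g => decodeLabel (σ g), fun g i => ⟨_, decodeTile_lt (σ g).2 i⟩,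
      forall_localRule_view_iff.1 hσ⟩
  · rintro ⟨lab, τ, h⟩
    choose σ hlab hτ using fun g => exists_decode_eq (lab g) (τ g)
    have hdecode : Simulates (n := n) (N := N) πG R P (fun g => decodeLabel (σ g))
        fun g i => decodeTile (Nat.card (Label mG mH n N)) k (σ g) i := by
      simpa only [hlab, hτ] using h
    exact ⟨σ, forall_localRule_view_iff.2 hdecode⟩

theorem primrec₂_decodeLabel {α β : Type*} [Primcodable α] [Finite α] [Primcodable β]
    (f : Label mG mH n N → α → β) : Primrec₂ fun κ a => f (decodeLabel κ) a := by
  have hmod : Primrec (Fin.ofNat (Nat.card (Label mG mH n N))) :=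
    Primrec.fin_val_iff.1 (Primrec.nat_mod.comp Primrec.id (Primrec.const _))
  have htable : Primrec fun x : Fin (Nat.card (Label mG mH n N)) × α =>
      f ((Finite.equivFin _).symm x.1) x.2 := Primrec.dom_finite _
  exact htable.comp ((hmod.comp Primrec.fst).pair Primrec.snd)

theorem primrec_wordWalk (i : Fin n) : Primrec₂ fun (p : Pattern mG) (w : Word mH) =>
    wordWalk (N := N) (fun v => decodeLabel (p.read v)) i w := by
  refine Primrec.list_foldl Primrec.snd (Primrec.const ([], i))
    (h := fun (x : Pattern mG × Word mH) (y : (Word mG × Fin n) × Fin mH × Bool) =>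
      walkStep (· ++ ·) (fun v => decodeLabel (N := N) (x.1.read v)) y.1 y.2) ?_
  have hpos : Primrec fun x : (Pattern mG × Word mH) × (Word mG × Fin n) × Fin mH × Bool =>
      x.2.1.1 := Primrec.fst.comp (Primrec.fst.comp Primrec.snd)
  have hstate : Primrec fun x : (Pattern mG × Word mH) × (Word mG × Fin n) × Fin mH × Bool =>
      x.2.1.2 := Primrec.snd.comp (Primrec.fst.comp Primrec.snd)
  have hmove := (primrec₂_decodeLabel fun (ℓ : Label mG mH n N) (s : Fin n × Fin mH × Bool) =>
    ℓ.move s.1 s.2).comp (Pattern.primrec_read.comp (Primrec.fst.comp Primrec.fst) hpos)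
      (hstate.pair (Primrec.snd.comp Primrec.snd))
  exact (Primrec.list_append.comp hpos (Primrec.fst.comp hmove)).pair (Primrec.snd.comp hmove)

theorem primrecRel_active : PrimrecRel fun (p : Pattern mG) (s : Word mG × Fin n) =>
    Active (mG := mG) (mH := mH) (N := N) (fun v => decodeLabel (p.read v)) s :=
  Primrec.eq.comp ((primrec₂_decodeLabel fun (ℓ : Label mG mH n N) i => (ℓ i).isSome).comp
    (Pattern.primrec_read.comp Primrec.fst (Primrec.fst.comp Primrec.snd))
    (Primrec.snd.comp Primrec.snd)) (Primrec.const true)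

theorem primrec_decodeTile (L : ℕ) : Primrec fun x : ℕ × ℕ × Fin n =>
    decodeTile L x.1 x.2.1 x.2.2 := by
  have hpow : Primrec fun x : ℕ × ℕ × Fin n => x.1 ^ (x.2.2 : ℕ) :=
    primrec_nat_pow.comp Primrec.fst (Primrec.fin_val.comp (Primrec.snd.comp Primrec.snd))
  exact Primrec.nat_mod.comp (Primrec.nat_div.comp (Primrec.nat_div.comp
    (Primrec.fst.comp Primrec.snd) (Primrec.const L)) hpow) Primrec.fst

theorem primrecPred_map_wordWalk_eq_one (π : FreeGroup (Fin mG) →* G) (i : Fin n) (r : Word mH) :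
    PrimrecPred fun p : Pattern mG =>
      π (FreeGroup.mk (wordWalk (N := N) (fun v => decodeLabel (p.read v)) i r).1) = 1 := by
  have hfinite : {v : Word mG | v.length ≤ N * r.length ∧ π (FreeGroup.mk v) = 1}.Finite :=
    (List.finite_length_le _ _).subset fun v hv => hv.1
  have hwalk := (primrec_wordWalk (N := N) i).comp (Primrec.id (α := Pattern mG)) (Primrec.const r)
  exact ((primrecPred_mem_of_finite hfinite).comp (Primrec.fst.comp hwalk)).of_eq fun p =>
    and_iff_right (length_wordWalk_le _ i r)

theorem primrec_decodeTile_wordWalk (i : Fin n) :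
    Primrec₂ fun (x : ℕ × Pattern mG) (w : Word mH) =>
      decodeTile (Nat.card (Label mG mH n N)) x.1
        (x.2.read (wordWalk (N := N) (fun v => decodeLabel (x.2.read v)) i w).1)
        (wordWalk (N := N) (fun v => decodeLabel (x.2.read v)) i w).2 := by
  have hp : Primrec fun x : (ℕ × Pattern mG) × Word mH => x.1.2 := Primrec.snd.comp Primrec.fst
  have hwalk := (primrec_wordWalk (mH := mH) (N := N) i).comp hp Primrec.snd
  exact (primrec_decodeTile (Nat.card (Label mG mH n N))).comp
    ((Primrec.fst.comp Primrec.fst).pair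
      ((Pattern.primrec_read.comp hp (Primrec.fst.comp hwalk)).pair (Primrec.snd.comp hwalk)))

theorem primrecRel_exists_tile_ne (i : Fin n) :
    PrimrecRel fun (I : ℕ × List (Pattern mH)) (p : Pattern mG) => ∀ P ∈ I.2, ∃ q ∈ P,
      decodeTile (Nat.card (Label mG mH n N)) I.1
        (p.read (wordWalk (N := N) (fun v => decodeLabel (p.read v)) i q.1).1)
        (wordWalk (N := N) (fun v => decodeLabel (p.read v)) i q.1).2 ≠ q.2 := by
  have hlist : ∀ {E : Word mH × ℕ → ℕ × Pattern mG → Prop}, PrimrecRel E →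
      PrimrecRel fun (I : ℕ × List (Pattern mH)) (p : Pattern mG) =>
        ∀ P ∈ I.2, ∃ q ∈ P, E q (I.1, p) := fun hE =>
    hE.exists_mem_list.forall_mem_list.comp (Primrec.snd.comp Primrec.fst)
      ((Primrec.fst.comp Primrec.fst).pair Primrec.snd)
  refine hlist (E := fun q x => decodeTile (Nat.card (Label mG mH n N)) x.1
    (x.2.read (wordWalk (N := N) (fun v => decodeLabel (x.2.read v)) i q.1).1)
    (wordWalk (N := N) (fun v => decodeLabel (x.2.read v)) i q.1).2 ≠ q.2) ?_
  exact PrimrecPred.not <| Primrec.eq.comp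
    ((primrec_decodeTile_wordWalk i).comp Primrec.snd (Primrec.fst.comp Primrec.fst))
    (Primrec.snd.comp Primrec.fst)

theorem primrecRel_simulationRule (π : FreeGroup (Fin mG) →* G) (hR : R.Finite) (n N : ℕ) :
    PrimrecRel fun (I : ℕ × List (Pattern mH)) (p : Pattern mG) =>
      SimulationRule π R n N I p.read := by
  have := hR.to_subtype
  have hp : Primrec fun x : (ℕ × List (Pattern mH)) × Pattern mG => x.2 := Primrec.snd
  have hwalk := fun (i : Fin n) (w : Word mH) =>
    (primrec_wordWalk (N := N) i).comp hp (Primrec.const w)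
  have hinactive := fun i : Fin n =>
    (primrecRel_active (mH := mH) (N := N)).not.comp hp (Primrec.const ([], i))
  refine PrimrecPred.and ?_ (PrimrecPred.and ?_ (PrimrecPred.and ?_ ?_))
  · exact primrecPred_exists_of_finite fun v => primrecPred_exists_of_finite fun i =>
      primrecRel_active.comp hp (Primrec.const _)
  · exact primrecPred_forall_of_finite fun i => ((hinactive i).or
      (primrecPred_forall_of_finite fun t => primrecRel_active.comp hp (hwalk i [t]))).of_eq
        fun x => imp_iff_not_or.symm
  · exact (primrecPred_forall_of_finite fun r : R => primrecPred_forall_of_finite fun i =>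
      ((primrecPred_map_wordWalk_eq_one π i r.1).comp hp).and
        (Primrec.eq.comp (Primrec.snd.comp (hwalk i r)) (Primrec.const i))).of_eq
          fun x => Subtype.forall
  · exact primrecPred_forall_of_finite fun i => ((hinactive i).or
      (primrecRel_exists_tile_ne i)).of_eq fun x => imp_iff_not_or.symm

end Coding

/-! ### Transfer along an injection -/

section Transfer

variable {mG mH n N : ℕ} {G H : Type*} [Group G] [Group H] {πG : FreeGroup (Fin mG) →* G}
  {πH : FreeGroup (Fin mH) →* H} {R : Set (Word mH)}

/-- A radius for `SimulationRule`, where `M` bounds the lengths of the relators. -/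
def simulationRadius (N M : ℕ) (P : List (Pattern mH)) : ℕ :=
  N * (1 + M + (P.flatten.map Prod.fst).flatten.length)

theorem primrec_simulationRadius (N M : ℕ) : Primrec (simulationRadius (mH := mH) N M) := by
  have hwords : Primrec fun P : List (Pattern mH) => (P.flatten.map Prod.fst).flatten :=
    Primrec.list_flatten.comp (Primrec.list_map Primrec.list_flatten (Primrec.fst.comp Primrec.snd))
  exact Primrec.nat_mul.comp (Primrec.const N)
    (Primrec.nat_add.comp (Primrec.const (1 + M)) (Primrec.list_length.comp hwords))

theorem isLocal_simulationRule {M : ℕ} (hM : ∀ r ∈ R, r.length ≤ M) (I : ℕ × List (Pattern mH)) :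
    IsLocal (simulationRadius N M I.2) (SimulationRule πG R n N I) := by
  have hP : ∀ p ∈ I.2, ∀ q ∈ p, q.1.length ≤ (I.2.flatten.map Prod.fst).flatten.length :=
    fun p hp q hq => (List.sublist_flatten_of_mem
      (List.mem_map_of_mem (List.mem_flatten_of_mem hp hq))).length_le
  refine fun c c' hc h => h.congr (fun w hw => by rw [hc w hw]) (fun w hw => by rw [hc w hw])
    (Nat.le_mul_of_pos_right N (by lia)) (fun w hw => Nat.mul_le_mul_left N ?_)
    (fun p hp q hq => Nat.mul_le_mul_left N ?_)
  · have := hM w hw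
    lia
  · have := hP p hp q hq
    lia

theorem HasDecidableDomino.of_injective (h : HasDecidableDomino πG) (hπH : Function.Surjective πH)
    {S : Set (FreeGroup (Fin mH))} (hS : S.Finite) (hker : πH.ker = Subgroup.normalClosure S)
    {e : H → G × Fin n} (he : Function.Injective e)
    (hstep : ∀ h t, ∃ w : Word mG, w.length ≤ N ∧
      (e (h * πH (FreeGroup.mk [t]))).1 = (e h).1 * πG (FreeGroup.mk w))
    (hdense : ∀ g, ∃ h, ∃ w : Word mG, w.length ≤ N ∧ (e h).1 = g * πG (FreeGroup.mk w)) :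
    HasDecidableDomino πH := by
  obtain ⟨R, hRfin, hR⟩ := exists_finite_isRelatorSet hS hker
  obtain ⟨M, hM⟩ := (hRfin.image List.length).bddAbove
  have hK : Primrec fun I : ℕ × List (Pattern mH) => I.1 ^ n * Nat.card (Label mG mH n N) :=
    Primrec.nat_mul.comp (primrec_nat_pow.comp Primrec.fst (Primrec.const n)) (Primrec.const _)
  have hiff : ∀ I : ℕ × List (Pattern mH), dominoSet πH I.1 I.2 = ∅ ↔
      {σ : G → Fin (I.1 ^ n * Nat.card (Label mG mH n N)) |
        ∀ g, SimulationRule πG R n N I (view πG (fun g => (σ g : ℕ)) g)} = ∅ := by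
    intro I
    rw [← not_iff_not, ← Ne, ← Ne, ← Set.nonempty_iff_ne_empty, ← Set.nonempty_iff_ne_empty]
    refine Iff.trans ⟨?_, ?_⟩ exists_simulationRule_iff.symm
    · rintro ⟨x, hx⟩
      exact exists_simulates he hstep hdense hR.map_mk_eq_one hx
    · rintro ⟨lab, τ, hsim⟩
      exact hsim.dominoSet_nonempty hπH hR
  exact (h.computablePred_localRule hK ((primrec_simulationRadius N M).comp Primrec.snd)
    (primrecRel_simulationRule πG hRfin n N)
    (isLocal_simulationRule fun r hr => hM ⟨r, hr, rfl⟩)).of_eq fun I => (hiff I).symm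

end Transfer

/-! ### Word metrics -/

section CayleyGraph

variable {G X : Type*} [Group G] {m : ℕ} {π : FreeGroup (Fin m) →* G}

theorem mem_markedGens_iff {x : G} : x ∈ markedGens π ↔ ∃ t, x = π (FreeGroup.mk [t]) := by
  have hinv : ∀ i : Fin m, FreeGroup.mk [(i, false)] = (FreeGroup.of i)⁻¹ := fun _ => rfl
  have hpos : ∀ i : Fin m, FreeGroup.mk [(i, true)] = FreeGroup.of i := fun _ => rfl
  simp only [markedGens, Set.mem_ofPred_eq, Prod.exists, Bool.exists_bool, hinv, hpos, map_inv,
    or_comm]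

theorem inv_mem_markedGens_iff {x : G} : x⁻¹ ∈ markedGens π ↔ x ∈ markedGens π := by
  simp only [markedGens, Set.mem_ofPred_eq, inv_eq_iff_eq_inv, inv_inv, or_comm]

theorem cayley_markedGens_adj_iff {x y : G} :
    (cayley (markedGens π)).Adj x y ↔ x ≠ y ∧ ∃ t, y = x * π (FreeGroup.mk [t]) := by
  have hsymm : y⁻¹ * x ∈ markedGens π ↔ x⁻¹ * y ∈ markedGens π := by
    rw [← inv_mem_markedGens_iff, mul_inv_rev, inv_inv]
  rw [cayley, SimpleGraph.fromRel_adj, hsymm, or_self, mem_markedGens_iff]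
  simp only [inv_mul_eq_iff_eq_mul]

theorem exists_walk_of_word (w : Word m) (x : G) :
    ∃ p : (cayley (markedGens π)).Walk x (x * π (FreeGroup.mk w)), p.length ≤ w.length := by
  induction w generalizing x with
  | nil => exact ⟨SimpleGraph.Walk.nil.copy rfl (by simp [← FreeGroup.one_eq_mk]), by simp⟩
  | cons t w ih =>
    obtain ⟨p, hp⟩ := ih (x * π (FreeGroup.mk [t]))
    have hend : x * π (FreeGroup.mk [t]) * π (FreeGroup.mk w) = x * π (FreeGroup.mk (t :: w)) := by
      rw [mul_assoc, ← map_mul, FreeGroup.mul_mk, List.singleton_append]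
    by_cases hx : x = x * π (FreeGroup.mk [t])
    · exact ⟨p.copy hx.symm hend, by grind [SimpleGraph.Walk.length_copy]⟩
    · have hadj := cayley_markedGens_adj_iff.2 ⟨hx, t, rfl⟩
      exact ⟨(p.cons hadj).copy rfl hend, by simpa using hp⟩

theorem exists_word_of_walk {x y : G} (p : (cayley (markedGens π)).Walk x y) :
    ∃ w : Word m, w.length ≤ p.length ∧ y = x * π (FreeGroup.mk w) := by
  induction p with
  | nil => exact ⟨[], le_rfl, by simp [← FreeGroup.one_eq_mk]⟩
  | cons hadj p ih =>
    obtain ⟨w, hw, rfl⟩ := ih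
    obtain ⟨-, t, rfl⟩ := cayley_markedGens_adj_iff.1 hadj
    refine ⟨t :: w, Nat.succ_le_succ hw, ?_⟩
    rw [mul_assoc, ← map_mul, FreeGroup.mul_mk, List.singleton_append]

theorem connected_cayley_markedGens (hπ : Function.Surjective π) :
    (cayley (markedGens π)).Connected where
  preconnected x y := by
    obtain ⟨⟨w⟩, hw⟩ := hπ (x⁻¹ * y)
    obtain ⟨p, -⟩ := exists_walk_of_word (π := π) w x
    have hy : x * π (FreeGroup.mk w) = y := mul_eq_of_eq_inv_mul hw
    exact ⟨p.copy rfl hy⟩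
  nonempty := ⟨1⟩

theorem dist_cayley_markedGens_le_iff (hπ : Function.Surjective π) {x y : G} {N : ℕ} :
    (cayley (markedGens π)).dist x y ≤ N ↔
      ∃ w : Word m, w.length ≤ N ∧ y = x * π (FreeGroup.mk w) := by
  constructor
  · intro h
    obtain ⟨p, hp⟩ := (connected_cayley_markedGens hπ).exists_walk_length_eq_dist x y
    obtain ⟨w, hw, hy⟩ := exists_word_of_walk p
    exact ⟨w, hw.trans (hp.trans_le h), hy⟩
  · rintro ⟨w, hw, rfl⟩
    obtain ⟨p, hp⟩ := exists_walk_of_word (π := π) w x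
    exact (SimpleGraph.dist_le p).trans (hp.trans hw)

theorem exists_injective_prodMk (hπ : Function.Surjective π) {f : G → X} {N : ℕ}
    (hf : ∀ x y, f x = f y → (cayley (markedGens π)).dist x y ≤ N) :
    ∃ (n : ℕ) (index : G → Fin n), Function.Injective fun x => (f x, index x) := by
  have hword : ∀ x, ∃ w : {w : Word m // w.length ≤ N},
      x = Function.invFun f (f x) * π (FreeGroup.mk w.1) := fun x => by
    obtain ⟨w, hw, hx⟩ := (dist_cayley_markedGens_le_iff hπ).1
      (hf (Function.invFun f (f x)) x (Function.invFun_eq ⟨x, rfl⟩))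
    exact ⟨⟨w, hw⟩, hx⟩
  choose word hx using hword
  refine ⟨_, fun x => Finite.equivFin _ (word x), fun x y hxy => ?_⟩
  obtain ⟨hfxy, hword⟩ := Prod.mk.inj hxy
  rw [hx x, hx y, hfxy, (Finite.equivFin _).injective hword]

end CayleyGraph

/-! ### Quasi-isometries -/

section QuasiIsometry

variable {G H : Type*} [Group G] [Group H] {S : Set G} {T : Set H} {f : G → H}

theorem isQI_iff_nat : IsQI S T f ↔ ∃ n : ℕ, 0 < n ∧
    (∀ x y, (cayley S).dist x y ≤ n * ((cayley T).dist (f x) (f y) + n) ∧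
      (cayley T).dist (f x) (f y) ≤ n * (cayley S).dist x y + n) ∧
    ∀ h, ∃ g, (cayley T).dist (f g) h ≤ n := by
  refine exists_congr fun n => and_congr_right fun hn => and_congr_left fun _ =>
    forall₂_congr fun x y => and_congr ?_ (by norm_cast)
  rw [sub_le_iff_le_add, div_le_iff₀' (Nat.cast_pos.2 hn)]
  norm_cast

theorem IsQI.exists_inverse (hT : (cayley T).Connected) (hf : IsQI S T f) :
    ∃ g : H → G, IsQI T S g := by
  obtain ⟨n, hn, hdist, hsurj⟩ := isQI_iff_nat.1 hf
  choose g hg using hsurj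
  have hg' : ∀ h, (cayley T).dist h (f (g h)) ≤ n := fun h => SimpleGraph.dist_comm ▸ hg h
  have hup : ∀ h h', (cayley T).dist (f (g h)) (f (g h')) ≤ (cayley T).dist h h' + 2 * n := by
    intro h h'
    have h₁ := hT.dist_triangle (u := f (g h)) (v := h) (w := f (g h'))
    have h₂ := hT.dist_triangle (u := h) (v := h') (w := f (g h'))
    linarith [hg h, hg' h']
  have hlow : ∀ h h', (cayley T).dist h h' ≤ (cayley T).dist (f (g h)) (f (g h')) + 2 * n := by
    intro h h'
    have h₁ := hT.dist_triangle (u := h) (v := f (g h)) (w := h')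
    have h₂ := hT.dist_triangle (u := f (g h)) (v := f (g h')) (w := h')
    linarith [hg' h, hg h']
  have hsq : n ≤ 3 * n ^ 2 := by nlinarith
  refine ⟨g, isQI_iff_nat.2 ⟨3 * n ^ 2, by positivity, fun h h' => ⟨?_, ?_⟩, fun x => ⟨f x, ?_⟩⟩⟩
  · calc (cayley T).dist h h'
        ≤ n * ((cayley S).dist (g h) (g h') + 3) := by linarith [hlow h h', (hdist (g h) (g h')).2]
      _ ≤ 3 * n ^ 2 * ((cayley S).dist (g h) (g h') + 3 * n ^ 2) := by gcongr; nlinarith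
  · calc (cayley S).dist (g h) (g h')
        ≤ n * ((cayley T).dist (f (g h)) (f (g h')) + n) := (hdist (g h) (g h')).1
      _ ≤ n * ((cayley T).dist h h' + 2 * n + n) := by gcongr; exact hup h h'
      _ = n * (cayley T).dist h h' + 3 * n ^ 2 := by ring
      _ ≤ 3 * n ^ 2 * (cayley T).dist h h' + 3 * n ^ 2 := by gcongr
  · calc (cayley S).dist (g (f x)) x
        ≤ n * ((cayley T).dist (f (g (f x))) (f x) + n) := (hdist (g (f x)) x).1
      _ ≤ n * (n + n) := by gcongr; exact hg (f x)
      _ ≤ 3 * n ^ 2 := by nlinarith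

variable {mG mH : ℕ} {πG : FreeGroup (Fin mG) →* G} {πH : FreeGroup (Fin mH) →* H}

theorem HasDecidableDomino.of_isQI {f : H → G} (h : HasDecidableDomino πG)
    (hf : IsQI (markedGens πH) (markedGens πG) f) (hπG : Function.Surjective πG)
    (hπH : Function.Surjective πH)
    (hHfp : ∃ R : Finset (FreeGroup (Fin mH)),
      πH.ker = Subgroup.normalClosure (R : Set (FreeGroup (Fin mH)))) :
    HasDecidableDomino πH := by
  obtain ⟨R, hR⟩ := hHfp
  obtain ⟨N, -, hdist, hsurj⟩ := isQI_iff_nat.1 hf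
  have hfibre : ∀ x y, f x = f y → (cayley (markedGens πH)).dist x y ≤ N * (0 + N) :=
    fun x y hxy => by simpa [hxy] using (hdist x y).1
  obtain ⟨n, index, hinj⟩ := exists_injective_prodMk hπH hfibre
  refine h.of_injective (N := N * 1 + N) hπH R.finite_toSet hR hinj (fun x t => ?_) fun g => ?_
  · have hedge : (cayley (markedGens πH)).dist x (x * πH (FreeGroup.mk [t])) ≤ 1 :=
      (dist_cayley_markedGens_le_iff hπH).2 ⟨[t], le_rfl, rfl⟩
    exact (dist_cayley_markedGens_le_iff hπG).1 ((hdist _ _).2.trans (by gcongr))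
  · obtain ⟨x, hx⟩ := hsurj g
    rw [SimpleGraph.dist_comm] at hx
    exact ⟨x, (dist_cayley_markedGens_le_iff hπG).1 (hx.trans (Nat.le_add_left _ _))⟩

end QuasiIsometry

/-- decidability of the domino problem is a quasi-isometry invariant of finitely
presented groups.  `G` and `H` are given by markings `πG`, `πH` (surjections from finitely
generated free groups) whose kernels are normally generated by finitely many relators, and
the quasi-isometry is with respect to the associated word metrics. -/
theorem stmt1 {G H : Type*} [Group G] [Group H] {mG mH : ℕ}
    (πG : FreeGroup (Fin mG) →* G) (πH : FreeGroup (Fin mH) →* H)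
    (hπG : Function.Surjective πG) (hπH : Function.Surjective πH)
    (hGfp : ∃ R : Finset (FreeGroup (Fin mG)),
      πG.ker = Subgroup.normalClosure (R : Set (FreeGroup (Fin mG))))
    (hHfp : ∃ R : Finset (FreeGroup (Fin mH)),
      πH.ker = Subgroup.normalClosure (R : Set (FreeGroup (Fin mH))))
    (hqi : ∃ f : G → H, IsQI (markedGens πG) (markedGens πH) f) :
    HasDecidableDomino πG ↔ HasDecidableDomino πH := by
  obtain ⟨f, hf⟩ := hqi
  obtain ⟨g, hg⟩ := hf.exists_inverse (connected_cayley_markedGens hπH)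
  exact ⟨fun hG => hG.of_isQI hg hπG hπH hHfp, fun hH => hH.of_isQI hf hπH hπG hGfp⟩
end

section
/- Let G be a finitely presented group admitting no weakly aperiodic subshift of finite type, and let H be a finitely presented group quasi-isometric to G. Then there exist a finite-index subgroup G₀ ≤ G, a finite-index subgroup H₀ ≤ H, and a finite normal subgroup K ⊴ G₀ such that H₀ is isomorphic to the quotient G₀/K. -/
/-- The product in `G` of (the letters of) a word over `S`. -/
def wordProd {G : Type*} [Group G] (S : Finset G) (w : List ↥S) : G :=
  (w.map (fun s => (s : G))).prod

/-- An elementary homotopy move between words over `S`: replace a subword `v` of length at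
most `K` by a word `v'` of length at most `K` representing the same element of `G`. -/
def ElemMove {G : Type*} [Group G] (S : Finset G) (K : ℕ) (w₁ w₂ : List ↥S) : Prop :=
  ∃ u v v' x : List ↥S, w₁ = u ++ v ++ x ∧ w₂ = u ++ v' ++ x ∧
    v.length ≤ K ∧ v'.length ≤ K ∧ wordProd S v = wordProd S v'

/-- `G` is presented over the (symmetric) generating set `S` by relators of length at most
`K`: any two words over `S` representing the same element of `G` are connected by a finite
sequence of elementary moves of size at most `K`. -/
def PresentedBy {G : Type*} [Group G] (S : Finset G) (K : ℕ) : Prop :=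
  ∀ w w' : List ↥S, wordProd S w = wordProd S w' →
    Relation.ReflTransGen (ElemMove S K) w w'

/-- `X ⊆ A^G` is a subshift of finite type: there is a finite family of forbidden patterns
`p i : F i → A` (`F i ⊆ G` finite) such that `X` consists exactly of those `σ` for which no
translate `σ·g = (x ↦ σ (g * x))` restricts on `F i` to `p i`. -/
def IsSFT {G A : Type*} [Group G] (X : Set (G → A)) : Prop :=
  ∃ (ι : Type) (_ : Finite ι) (F : ι → Finset G) (p : (i : ι) → (↥(F i) → A)),
    X = {σ : G → A | ∀ (g : G) (i : ι), ∃ x : ↥(F i), σ (g * ↑x) ≠ p i x}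

/-- The stabilizer of a configuration `σ : G → A` under the shift action
`(σ·g)(x) = σ(g*x)`. -/
def shiftStab {G A : Type*} [Group G] (σ : G → A) : Subgroup G where
  carrier := {g : G | ∀ x : G, σ (g * x) = σ x}
  one_mem' := by intro x; simp
  mul_mem' := by
    intro a b ha hb x
    rw [mul_assoc, ha, hb]
  inv_mem' := by
    intro a ha x
    have h := ha (a⁻¹ * x)
    rw [mul_inv_cancel_left] at h
    exact h.symm

/-- `G` admits a weakly aperiodic subshift of finite type: a nonempty SFT on a finite
alphabet all of whose points have stabilizer of infinite index in `G`
(`index = 0` encodes infinite index). -/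
def HasWeaklyAperiodicSFT (G : Type*) [Group G] : Prop :=
  ∃ (A : Type) (_ : Finite A) (X : Set (G → A)), IsSFT X ∧ X.Nonempty ∧
    ∀ σ ∈ X, (shiftStab σ).index = 0

/-!
Label every edge `(g, s)` of the Cayley graph of `G` by the displacement `(f g)⁻¹ * f (g * s)` of a
quasi-isometry `f : G → H`. Only finitely many labels occur, and the labellings that on every ball
of a fixed radius look like displacements of a locally quasi-isometric map form a nonempty subshift
of finite type. By assumption one of them has a stabilizer `G₀` of finite index. As the relators of
`G` are short, this labelling integrates to a map `f : G → H` with `f 1 = 1`, which still looks like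
a quasi-isometry on every ball and satisfies `f (g * x) = f g * f x` for `g ∈ G₀`; in particular
`f` is a homomorphism on `G₀`.

Such an `f` is a coarse covering map: paths of `H` lift along it. Hence it is coarsely surjective,
so the image of `G₀` has finite index. As the relators of `H` are short, the endpoint of a lift
depends up to a bounded error only on the endpoint of the path, so that `f` has bounded fibres and
the kernel of `f` on `G₀` is finite.
-/

/-- `S` is a symmetric generating set of `G`. -/
structure IsSymmGenerating {G : Type*} [Group G] (S : Finset G) : Prop where
  inv_mem : ∀ s ∈ S, s⁻¹ ∈ S
  closure_eq_top : Subgroup.closure (S : Set G) = ⊤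

/-- The word metric of `G` with respect to `S`. -/
noncomputable def wordDist {G : Type*} [Group G] (S : Finset G) (x y : G) : ℕ :=
  (cayley (S : Set G)).dist x y

section WordMetric

variable {G : Type*} [Group G] {S : Finset G}

@[simp]
lemma wordProd_nil : wordProd S [] = 1 := rfl

@[simp]
lemma wordProd_cons (s : ↥S) (w : List ↥S) : wordProd S (s :: w) = s * wordProd S w := by
  simp [wordProd]

@[simp]
lemma wordProd_append (v w : List ↥S) :
    wordProd S (v ++ w) = wordProd S v * wordProd S w := by
  simp [wordProd]

@[simp]
lemma wordDist_self (x : G) : wordDist S x x = 0 :=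
  SimpleGraph.dist_self

lemma wordDist_comm (x y : G) : wordDist S x y = wordDist S y x :=
  SimpleGraph.dist_comm

lemma cayley_edist_mul_generator_le (x : G) (s : ↥S) :
    (cayley (S : Set G)).edist x (x * s) ≤ 1 := by
  rw [SimpleGraph.edist_le_one_iff_adj_or_eq, cayley, SimpleGraph.fromRel_adj]
  by_cases h : x = x * s
  · exact Or.inr h
  · exact Or.inl ⟨h, Or.inl (by simp)⟩

lemma cayley_edist_mul_wordProd_le (x : G) (w : List ↥S) :
    (cayley (S : Set G)).edist x (x * wordProd S w) ≤ w.length := by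
  induction w generalizing x with
  | nil => simp
  | cons s w ih =>
    calc (cayley (S : Set G)).edist x (x * wordProd S (s :: w))
        ≤ (cayley (S : Set G)).edist x (x * s) +
          (cayley (S : Set G)).edist (x * s) (x * wordProd S (s :: w)) :=
          SimpleGraph.edist_triangle
      _ ≤ 1 + w.length := by
          rw [wordProd_cons, ← mul_assoc]
          exact add_le_add (cayley_edist_mul_generator_le x s) (ih _)
      _ = (s :: w).length := by simp [add_comm]

lemma wordDist_mul_wordProd_le (x : G) (w : List ↥S) :
    wordDist S x (x * wordProd S w) ≤ w.length :=
  ENat.toNat_le_of_le_natCast (cayley_edist_mul_wordProd_le x w)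

lemma wordDist_mul_generator_le (x : G) {s : G} (hs : s ∈ S) : wordDist S x (x * s) ≤ 1 := by
  simpa using wordDist_mul_wordProd_le x [(⟨s, hs⟩ : ↥S)]

namespace IsSymmGenerating

lemma exists_word_of_walk (hS : IsSymmGenerating S) {x y : G} (p : (cayley (S : Set G)).Walk x y) :
    ∃ w : List ↥S, w.length = p.length ∧ x * wordProd S w = y := by
  induction p with
  | nil => exact ⟨[], by simp⟩
  | @cons x y z hxy _ ih =>
    obtain ⟨w, hw, rfl⟩ := ih
    have hs : x⁻¹ * y ∈ S :=
      ((SimpleGraph.fromRel_adj _ _ _).1 hxy).2.elim id fun h => by simpa using hS.inv_mem _ h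
    exact ⟨⟨x⁻¹ * y, hs⟩ :: w, by simp [hw], by simp [mul_assoc]⟩

lemma exists_wordProd_eq (hS : IsSymmGenerating S) (x : G) : ∃ w : List ↥S, wordProd S w = x := by
  have hx : x ∈ Subgroup.closure (S : Set G) := hS.closure_eq_top ▸ Subgroup.mem_top x
  induction hx using Subgroup.closure_induction_left with
  | one => exact ⟨[], rfl⟩
  | mul_left s hs _ _ ih =>
    obtain ⟨w, rfl⟩ := ih
    exact ⟨⟨s, hs⟩ :: w, by simp⟩
  | inv_mul_cancel s hs _ _ ih =>
    obtain ⟨w, rfl⟩ := ih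
    exact ⟨⟨s⁻¹, hS.inv_mem s hs⟩ :: w, by simp⟩

lemma cayley_connected (hS : IsSymmGenerating S) : (cayley (S : Set G)).Connected where
  preconnected x y := by
    obtain ⟨w, hw⟩ := hS.exists_wordProd_eq (x⁻¹ * y)
    have h := cayley_edist_mul_wordProd_le x w
    rw [hw, mul_inv_cancel_left] at h
    exact SimpleGraph.reachable_of_edist_ne_top (ne_top_of_le_ne_top (ENat.natCast_ne_top _) h)

lemma wordDist_triangle (hS : IsSymmGenerating S) (x y z : G) :
    wordDist S x z ≤ wordDist S x y + wordDist S y z :=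
  hS.cayley_connected.dist_triangle

lemma exists_word_length_eq_wordDist (hS : IsSymmGenerating S) (x y : G) :
    ∃ w : List ↥S, w.length = wordDist S x y ∧ x * wordProd S w = y := by
  obtain ⟨p, hp⟩ := hS.cayley_connected.exists_walk_length_eq_dist x y
  obtain ⟨w, hw, hxy⟩ := hS.exists_word_of_walk p
  exact ⟨w, hw.trans hp, hxy⟩

lemma wordDist_mul_left_le (hS : IsSymmGenerating S) (g x y : G) :
    wordDist S (g * x) (g * y) ≤ wordDist S x y := by
  obtain ⟨w, hw, rfl⟩ := hS.exists_word_length_eq_wordDist x y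
  rw [← mul_assoc, ← hw]
  exact wordDist_mul_wordProd_le _ w

lemma wordDist_mul_left (hS : IsSymmGenerating S) (g x y : G) :
    wordDist S (g * x) (g * y) = wordDist S x y :=
  (hS.wordDist_mul_left_le g x y).antisymm
    (by simpa using hS.wordDist_mul_left_le g⁻¹ (g * x) (g * y))

lemma wordDist_self_mul (hS : IsSymmGenerating S) (x u : G) :
    wordDist S x (x * u) = wordDist S 1 u := by
  simpa using hS.wordDist_mul_left x 1 u

lemma finite_setOf_wordDist_le (hS : IsSymmGenerating S) (x : G) (r : ℕ) :
    {y | wordDist S x y ≤ r}.Finite := by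
  refine ((List.finite_length_le ↥S r).image (x * wordProd S ·)).subset fun y hy => ?_
  obtain ⟨w, hw, hxy⟩ := hS.exists_word_length_eq_wordDist x y
  exact ⟨w, hw.trans_le hy, hxy⟩

end IsSymmGenerating

end WordMetric

section Transport

variable {G Q : Type*} [Group G] {S : Finset G}

/-- Parallel transport of a state `q` along the path in the Cayley graph that starts at `g` and
reads the word `w`; the edge from `g` labelled `s` acts on states by `step g s`. -/
def pathTransport (step : G → ↥S → Q → Q) : G → List ↥S → Q → Q
  | _, [], q => q
  | g, s :: w, q => pathTransport step (g * s) w (step g s q)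

lemma pathTransport_append (step : G → ↥S → Q → Q) (g : G) (v w : List ↥S) (q : Q) :
    pathTransport step g (v ++ w) q =
      pathTransport step (g * wordProd S v) w (pathTransport step g v q) := by
  induction v generalizing g q with
  | nil => simp [pathTransport]
  | cons s v ih => simp [pathTransport, ih, mul_assoc]

variable {step : G → ↥S → Q → Q} {rel : G → Q → Q → Prop}

lemma pathTransport_rel_pathTransport
    (hstep : ∀ g (s : ↥S) q q', rel g q q' → rel (g * s) (step g s q) (step g s q'))
    {g : G} {q q' : Q} (w : List ↥S) (h : rel g q q') :
    rel (g * wordProd S w) (pathTransport step g w q) (pathTransport step g w q') := by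
  induction w generalizing g q q' with
  | nil => simpa [pathTransport] using h
  | cons s w ih => simpa [pathTransport, mul_assoc] using ih (hstep g s q q' h)

lemma ElemMove.wordProd_eq {K : ℕ} {w w' : List ↥S} (h : ElemMove S K w w') :
    wordProd S w = wordProd S w' := by
  obtain ⟨u, v, v', x, rfl, rfl, -, -, hvv'⟩ := h
  simp [hvv']

lemma ElemMove.pathTransport_rel {K : ℕ}
    (hstep : ∀ g (s : ↥S) q q', rel g q q' → rel (g * s) (step g s q) (step g s q'))
    (hmove : ∀ g q v v', rel g q q → v.length ≤ K → v'.length ≤ K →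
      wordProd S v = wordProd S v' →
        rel (g * wordProd S v) (pathTransport step g v q) (pathTransport step g v' q))
    {w w' : List ↥S} (hw : ElemMove S K w w') {g : G} {q : Q} (hq : rel g q q) :
    rel (g * wordProd S w) (pathTransport step g w q) (pathTransport step g w' q) := by
  obtain ⟨u, v, v', x, rfl, rfl, hv, hv', hvv'⟩ := hw
  have hmid := hmove _ _ v v' (pathTransport_rel_pathTransport hstep u hq) hv hv' hvv'
  simpa [pathTransport_append, mul_assoc, hvv'] using
    pathTransport_rel_pathTransport hstep x hmid

-- `rel g` is a partial equivalence relation on the states over `g`: a state related to itself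
-- is an admissible one.
theorem PresentedBy.pathTransport_rel {K : ℕ} (hK : PresentedBy S K)
    (htrans : ∀ g q q' q'', rel g q q' → rel g q' q'' → rel g q q'')
    (hstep : ∀ g (s : ↥S) q q', rel g q q' → rel (g * s) (step g s q) (step g s q'))
    (hmove : ∀ g q v v', rel g q q → v.length ≤ K → v'.length ≤ K →
      wordProd S v = wordProd S v' →
        rel (g * wordProd S v) (pathTransport step g v q) (pathTransport step g v' q))
    {w w' : List ↥S} (hw : wordProd S w = wordProd S w') {g : G} {q : Q} (hq : rel g q q) :
    rel (g * wordProd S w) (pathTransport step g w q) (pathTransport step g w' q) := by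
  induction hK w w' hw with
  | refl => exact pathTransport_rel_pathTransport hstep w hq
  | tail _ hmv ih =>
    have hprod := hw.trans hmv.wordProd_eq.symm
    exact htrans _ _ _ _ (ih hprod) (hprod ▸ hmv.pathTransport_rel hstep hmove hq)

end Transport

section Displacement

variable {G H : Type*} [Group G] [Group H]

/-- The displacement of `f` from `g` to `g * u`: the germ of `f` at `g`, up to left translation
in `H`. Its values on a generating set are the labels `f` puts on the edges of the Cayley graph. -/
def displacement (f : G → H) (g u : G) : H := (f g)⁻¹ * f (g * u)

lemma displacement_mul (f : G → H) (g u v : G) :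
    displacement f g (u * v) = displacement f g u * displacement f (g * u) v := by
  simp [displacement, mul_assoc]

variable {S : Finset G}

/-- The step that integrates a labelling `l` of the edges by elements of `H`. -/
def integralStep (l : G → ↥S → H) : G → ↥S → H → H := fun g s h => h * l g s

lemma pathTransport_integralStep {l : G → ↥S → H} {f : G → H} {g k : G}
    (hS : IsSymmGenerating S) (w : List ↥S)
    (hl : ∀ x, wordDist S 1 x ≤ w.length → ∀ s : ↥S, l (g * x) s = displacement f (k * x) s)
    (h : H) :
    pathTransport (integralStep l) g w h = h * displacement f k (wordProd S w) := by
  induction w generalizing g k h with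
  | nil => simp [pathTransport, displacement]
  | cons s w ih =>
    have hl' : ∀ x, wordDist S 1 x ≤ w.length →
        ∀ t : ↥S, l (g * s * x) t = displacement f (k * s * x) t := by
      intro x hx t
      have hs : wordDist S 1 (s * x) ≤ (s :: w).length := by
        have h₁ := hS.wordDist_triangle 1 s (s * x)
        have h₂ : wordDist S 1 s ≤ 1 := by simpa using wordDist_mul_generator_le 1 s.2
        rw [hS.wordDist_self_mul] at h₁
        rw [List.length_cons]
        omega
      simpa [mul_assoc] using hl (s * x) hs t
    have hls : l g s = displacement f k s := by simpa using hl 1 (by simp) s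
    rw [pathTransport, ih hl', integralStep, hls, mul_assoc, ← displacement_mul, wordProd_cons]

lemma displacement_eqOn_of_generators {f f' : G → H} {g k : G} {R : ℕ} (hS : IsSymmGenerating S)
    (hff' : ∀ x, wordDist S 1 x ≤ R →
      ∀ s : ↥S, displacement f (g * x) s = displacement f' (k * x) s) :
    Set.EqOn (displacement f g) (displacement f' k) {u | wordDist S 1 u ≤ R} := by
  intro u hu
  obtain ⟨w, hw, rfl⟩ := hS.exists_word_length_eq_wordDist 1 u
  have hwR : w.length ≤ R := hw.trans_le hu
  let l : G → ↥S → H := fun x s => displacement f x s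
  have hf : pathTransport (integralStep l) g w 1 = 1 * displacement f g (wordProd S w) :=
    pathTransport_integralStep hS w (fun _ _ _ => rfl) 1
  have hf' : pathTransport (integralStep l) g w 1 = 1 * displacement f' k (wordProd S w) :=
    pathTransport_integralStep hS w (fun x hx => hff' x (hx.trans hwR)) 1
  simpa only [one_mul] using hf.symm.trans hf'

theorem PresentedBy.exists_displacement_eq {K : ℕ} (hK : PresentedBy S K)
    (hS : IsSymmGenerating S) {l : G → ↥S → H}
    (hl : ∀ g, ∃ (f : G → H) (k : G), ∀ x, wordDist S 1 x ≤ K →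
      ∀ s : ↥S, l (g * x) s = displacement f (k * x) s) :
    ∃ f : G → H, f 1 = 1 ∧ ∀ g, ∀ s : ↥S, displacement f g s = l g s := by
  have hpath : ∀ g h v v', wordProd S v = wordProd S v' →
      pathTransport (integralStep l) g v h = pathTransport (integralStep l) g v' h := by
    intro g h v v' hvv'
    refine hK.pathTransport_rel (rel := fun _ => Eq) (fun _ _ _ _ => Eq.trans)
      (fun _ _ _ _ => congrArg _) (fun g h v v' _ hv hv' hvv' => ?_) hvv' rfl
    obtain ⟨f, k, hf⟩ := hl g
    rw [pathTransport_integralStep hS v (fun x hx => hf x (hx.trans hv)),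
      pathTransport_integralStep hS v' (fun x hx => hf x (hx.trans hv')), hvv']
  choose word hword using hS.exists_wordProd_eq
  refine ⟨fun x => pathTransport (integralStep l) 1 (word x) 1, ?_, fun g s => ?_⟩
  · exact hpath 1 1 (word 1) [] (hword 1)
  · have hgs := hpath 1 1 (word (g * s)) (word g ++ [s]) (by simp [hword])
    simp only [displacement, hgs, pathTransport_append, pathTransport, hword, one_mul,
      integralStep, inv_mul_cancel_left]

end Displacement

section LocalQuasiIsometry

variable {G H : Type*} [Group G] [Group H]

/-- `f` looks like a quasi-isometry on the ball of radius `R` around `g`: generators move `f g` by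
at most `m`; a point `m`-close to `f g` can be followed along any edge of `H`, at the cost of
moving `g` by at most `r`; and points of the ball whose images are `m`-close to a common point are
already `r`-close to `g`. -/
structure IsLocalQIAt (S : Finset G) (T : Finset H) (m r R : ℕ) (f : G → H) (g : G) : Prop where
  lipschitz : ∀ s ∈ S, wordDist T (f g) (f (g * s)) ≤ m
  exists_lift : ∀ h, wordDist T (f g) h ≤ m → ∀ t ∈ T,
    ∃ g', wordDist S g g' ≤ r ∧ wordDist T (f g') (h * t) ≤ m
  wordDist_le : ∀ g' h, wordDist S g g' ≤ R → wordDist T (f g) h ≤ m → wordDist T (f g') h ≤ m →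
    wordDist S g g' ≤ r

/-- Two points are on the same sheet over `h`, when `f` is viewed as a coarse covering map, if both
are coarse preimages of `h` and they are close to each other. -/
def SameSheet (S : Finset G) (T : Finset H) (m r : ℕ) (f : G → H) (h : H) (g g' : G) : Prop :=
  wordDist T (f g) h ≤ m ∧ wordDist T (f g') h ≤ m ∧ wordDist S g g' ≤ r

/-- `step` lifts the edges of the Cayley graph of `H` along `f`, seen as a coarse covering map. -/
def IsEdgeLifting (S : Finset G) (T : Finset H) (m r : ℕ) (f : G → H)
    (step : H → ↥T → G → G) : Prop :=
  ∀ h t g, wordDist T (f g) h ≤ m →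
    wordDist S g (step h t g) ≤ r ∧ wordDist T (f (step h t g)) (h * t) ≤ m

variable {S : Finset G} {T : Finset H} {m r R : ℕ} {f : G → H}

lemma IsSymmGenerating.wordDist_eq_of_displacement_eq (hT : IsSymmGenerating T) {f' : G → H}
    {g k u : G} (hu : displacement f g u = displacement f' k u) (h : H) :
    wordDist T (f (g * u)) h = wordDist T (f' (k * u)) (f' k * (f g)⁻¹ * h) := by
  rw [← hT.wordDist_mul_left (f' k * (f g)⁻¹), mul_assoc _ _ (f (g * u))]
  congr 1
  rw [← eq_inv_mul_iff_mul_eq]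
  exact hu

lemma IsLocalQIAt.of_displacement_eqOn (hS : IsSymmGenerating S) (hT : IsSymmGenerating T)
    (hR : 1 ≤ R) (hrR : r ≤ R) {f' : G → H} {g k : G} (hf' : IsLocalQIAt S T m r R f' k)
    (hff' : Set.EqOn (displacement f g) (displacement f' k) {u | wordDist S 1 u ≤ R}) :
    IsLocalQIAt S T m r R f g := by
  have himage : ∀ u, wordDist S 1 u ≤ R → ∀ h,
      wordDist T (f (g * u)) h = wordDist T (f' (k * u)) (f' k * (f g)⁻¹ * h) :=
    fun u hu => hT.wordDist_eq_of_displacement_eq (hff' hu)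
  have hbase : ∀ h, wordDist T (f g) h = wordDist T (f' k) (f' k * (f g)⁻¹ * h) := by
    simpa using himage 1 (by simp)
  refine ⟨fun s hs => ?_, fun h hh t ht => ?_, fun g' h hg' hgh hg'h => ?_⟩
  · have hs1 : wordDist S 1 s ≤ R := by
      simpa using (wordDist_mul_generator_le 1 hs).trans hR
    rw [wordDist_comm, himage s hs1, inv_mul_cancel_right, wordDist_comm]
    exact hf'.lipschitz s hs
  · obtain ⟨k', hk', hlift⟩ := hf'.exists_lift _ ((hbase h).symm.trans_le hh) t ht
    obtain ⟨u, rfl⟩ : ∃ u, k' = k * u := ⟨k⁻¹ * k', by simp⟩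
    rw [hS.wordDist_self_mul] at hk'
    refine ⟨g * u, (hS.wordDist_self_mul g u).trans_le hk', ?_⟩
    rwa [himage u (hk'.trans hrR), ← mul_assoc]
  · obtain ⟨u, rfl⟩ : ∃ u, g' = g * u := ⟨g⁻¹ * g', by simp⟩
    rw [hS.wordDist_self_mul] at hg' ⊢
    rw [himage u hg'] at hg'h
    rw [hbase] at hgh
    simpa only [hS.wordDist_self_mul] using
      hf'.wordDist_le _ _ ((hS.wordDist_self_mul k u).trans_le hg') hgh hg'h

lemma IsQI.exists_wordDist_bounds (hf : IsQI (S : Set G) (T : Set H) f) :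
    ∃ n : ℕ, (∀ x y, wordDist T (f x) (f y) ≤ n * wordDist S x y + n) ∧
      (∀ x y, wordDist S x y ≤ n * (wordDist T (f x) (f y) + n)) ∧
      ∀ h, ∃ g, wordDist T (f g) h ≤ n := by
  obtain ⟨n, hn, hemb, hsurj⟩ := hf
  refine ⟨n, fun x y => by exact_mod_cast (hemb x y).2, fun x y => ?_, hsurj⟩
  have hlower := sub_le_iff_le_add.1 (hemb x y).1
  rw [div_le_iff₀' (by exact_mod_cast hn)] at hlower
  exact_mod_cast hlower

lemma IsQI.exists_isLocalQIAt (hT : IsSymmGenerating T) (hf : IsQI (S : Set G) (T : Set H) f) :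
    ∃ m r, ∀ R g, IsLocalQIAt S T m r R f g := by
  obtain ⟨n, hupper, hlower, hsurj⟩ := hf.exists_wordDist_bounds
  have hclose : ∀ x y, wordDist T (f x) (f y) ≤ 4 * n + 1 →
      wordDist S x y ≤ n * (5 * n + 1) := fun x y hxy =>
    (hlower x y).trans (Nat.mul_le_mul_left n (by omega))
  refine ⟨2 * n, n * (5 * n + 1), fun R g => ⟨fun s hs => ?_, fun h hh t ht => ?_,
    fun g' h _ hgh hg'h => hclose g g' ?_⟩⟩
  · have hs1 := Nat.mul_le_mul_left n (wordDist_mul_generator_le g hs)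
    have := hupper g (g * s)
    omega
  · obtain ⟨g', hg'⟩ := hsurj (h * t)
    refine ⟨g', hclose g g' ?_, hg'.trans (by omega)⟩
    have h₁ := hT.wordDist_triangle (f g) h (h * t)
    have h₂ := wordDist_mul_generator_le h ht
    have h₃ := hT.wordDist_triangle (f g) (h * t) (f g')
    have h₄ := wordDist_comm (S := T) (h * t) (f g')
    omega
  · have h₁ := hT.wordDist_triangle (f g) h (f g')
    have h₂ := wordDist_comm (S := T) h (f g')
    omega

lemma exists_isEdgeLifting (hf : ∀ g, IsLocalQIAt S T m r R f g) :
    ∃ step, IsEdgeLifting S T m r f step := by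
  choose! step hstep using fun (h : H) (t : ↥T) (g : G) (hg : wordDist T (f g) h ≤ m) =>
    (hf g).exists_lift h hg t t.2
  exact ⟨step, hstep⟩

namespace SameSheet

lemma of_wordDist_le (hf : ∀ g, IsLocalQIAt S T m r R f g) {h : H} {g g' : G}
    (hg : wordDist T (f g) h ≤ m) (hg' : wordDist T (f g') h ≤ m) (hgg' : wordDist S g g' ≤ R) :
    SameSheet S T m r f h g g' :=
  ⟨hg, hg', (hf g).wordDist_le g' h hgg' hg hg'⟩

lemma refl {h : H} {g : G} (hg : wordDist T (f g) h ≤ m) : SameSheet S T m r f h g g :=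
  ⟨hg, hg, by simp⟩

lemma trans (hS : IsSymmGenerating S) (hf : ∀ g, IsLocalQIAt S T m r R f g) (hrR : 3 * r ≤ R)
    {h : H} {g g' g'' : G} (hgg' : SameSheet S T m r f h g g')
    (hg'g'' : SameSheet S T m r f h g' g'') : SameSheet S T m r f h g g'' := by
  obtain ⟨hg, -, hgg'⟩ := hgg'
  obtain ⟨-, hg'', hg'g''⟩ := hg'g''
  refine of_wordDist_le hf hg hg'' ?_
  have := hS.wordDist_triangle g g' g''
  omega

lemma map_step (hS : IsSymmGenerating S) (hf : ∀ g, IsLocalQIAt S T m r R f g)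
    (hrR : 3 * r ≤ R) {step : H → ↥T → G → G} (hstep : IsEdgeLifting S T m r f step)
    (h : H) (t : ↥T) (g g' : G) (hgg' : SameSheet S T m r f h g g') :
    SameSheet S T m r f (h * t) (step h t g) (step h t g') := by
  obtain ⟨hg, hg', hgg'⟩ := hgg'
  obtain ⟨hmove, hlift⟩ := hstep h t g hg
  obtain ⟨hmove', hlift'⟩ := hstep h t g' hg'
  refine of_wordDist_le hf hlift hlift' ?_
  have h₁ := hS.wordDist_triangle (step h t g) g (step h t g')
  have h₂ := hS.wordDist_triangle g g' (step h t g')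
  have h₃ := wordDist_comm (S := S) (step h t g) g
  omega

end SameSheet

lemma IsEdgeLifting.wordDist_pathTransport_le (hS : IsSymmGenerating S) {step : H → ↥T → G → G}
    (hstep : IsEdgeLifting S T m r f step) {h : H} {g : G} (hg : wordDist T (f g) h ≤ m)
    (w : List ↥T) :
    wordDist S g (pathTransport step h w g) ≤ r * w.length ∧
      wordDist T (f (pathTransport step h w g)) (h * wordProd T w) ≤ m := by
  induction w generalizing h g with
  | nil => simpa [pathTransport] using hg
  | cons t w ih =>
    obtain ⟨hmove, hlift⟩ := hstep h t g hg
    obtain ⟨ihmove, ihlift⟩ := ih hlift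
    refine ⟨?_, by simpa [pathTransport, mul_assoc] using ihlift⟩
    have := hS.wordDist_triangle g (step h t g) (pathTransport step (h * t) w (step h t g))
    simp only [pathTransport, List.length_cons, mul_add, mul_one]
    omega

lemma sameSheet_pathTransport_of_wordProd_eq (hS : IsSymmGenerating S)
    (hf : ∀ g, IsLocalQIAt S T m r R f g) (hrR : 3 * r ≤ R)
    {step : H → ↥T → G → G} (hstep : IsEdgeLifting S T m r f step)
    {K : ℕ} (hK : PresentedBy T K) (hKR : 2 * (r * K) ≤ R) {w w' : List ↥T}
    (hw : wordProd T w = wordProd T w') {h : H} {g : G} (hg : wordDist T (f g) h ≤ m) :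
    SameSheet S T m r f (h * wordProd T w) (pathTransport step h w g)
      (pathTransport step h w' g) := by
  refine hK.pathTransport_rel (rel := SameSheet S T m r f)
    (fun _ _ _ _ => SameSheet.trans hS hf hrR) (SameSheet.map_step hS hf hrR hstep)
    (fun h g v v' hg hv hv' hvv' => ?_) hw (.refl hg)
  obtain ⟨hmove, hlift⟩ := hstep.wordDist_pathTransport_le hS hg.1 v
  obtain ⟨hmove', hlift'⟩ := hstep.wordDist_pathTransport_le hS hg.1 v'
  refine .of_wordDist_le hf hlift (hvv' ▸ hlift') ?_
  have h₁ := hS.wordDist_triangle (pathTransport step h v g) g (pathTransport step h v' g)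
  have h₂ := wordDist_comm (S := S) (pathTransport step h v g) g
  have h₃ := Nat.mul_le_mul_left r hv
  have h₄ := Nat.mul_le_mul_left r hv'
  omega

lemma exists_sameSheet_pathTransport (hS : IsSymmGenerating S) (hT : IsSymmGenerating T)
    (hf : ∀ g, IsLocalQIAt S T m r R f g) (hrR : 3 * r ≤ R) (hmR : r * m + 1 ≤ R)
    {step : H → ↥T → G → G} (hstep : IsEdgeLifting S T m r f step) (x : G) (u : List ↥S) :
    ∃ w : List ↥T, f x * wordProd T w = f (x * wordProd S u) ∧
      SameSheet S T m r f (f (x * wordProd S u)) (pathTransport step (f x) w x)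
        (x * wordProd S u) := by
  induction u generalizing x with
  | nil => exact ⟨[], by simp, by simpa [pathTransport] using .refl (by simp)⟩
  | cons s u ih =>
    obtain ⟨w, hw, hsheet⟩ := ih (x * s)
    obtain ⟨v, hvlen, hv⟩ := hT.exists_word_length_eq_wordDist (f x) (f (x * s))
    rw [wordProd_cons, ← mul_assoc]
    refine ⟨v ++ w, by simp [← mul_assoc, hv, hw], ?_⟩
    have hedge : SameSheet S T m r f (f (x * s)) (pathTransport step (f x) v x) (x * s) := by
      obtain ⟨hmove, hlift⟩ := hstep.wordDist_pathTransport_le hS (h := f x) (g := x) (by simp) v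
      refine .of_wordDist_le hf (hv ▸ hlift) (by simp) ?_
      have h₁ := hS.wordDist_triangle (pathTransport step (f x) v x) x (x * s)
      have h₂ := wordDist_comm (S := S) (pathTransport step (f x) v x) x
      have h₃ := wordDist_mul_generator_le x s.2
      have h₄ := Nat.mul_le_mul_left r (hvlen.trans_le ((hf x).lipschitz s s.2))
      omega
    have hrest := pathTransport_rel_pathTransport (SameSheet.map_step hS hf hrR hstep) w hedge
    rw [hw] at hrest
    rw [pathTransport_append, hv]
    exact hrest.trans hS hf hrR hsheet

theorem exists_wordDist_le_of_forall_isLocalQIAt (hS : IsSymmGenerating S)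
    (hT : IsSymmGenerating T) (hf : ∀ g, IsLocalQIAt S T m r R f g) (h : H) :
    ∃ g, wordDist T (f g) h ≤ m := by
  obtain ⟨step, hstep⟩ := exists_isEdgeLifting hf
  obtain ⟨w, hw⟩ := hT.exists_wordProd_eq ((f 1)⁻¹ * h)
  refine ⟨pathTransport step (f 1) w 1, ?_⟩
  simpa [hw] using (hstep.wordDist_pathTransport_le hS (h := f 1) (g := 1) (by simp) w).2

theorem wordDist_le_of_apply_eq_of_forall_isLocalQIAt (hS : IsSymmGenerating S)
    (hT : IsSymmGenerating T) (hf : ∀ g, IsLocalQIAt S T m r R f g) {K : ℕ}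
    (hK : PresentedBy T K) (hrR : 3 * r ≤ R) (hKR : 2 * (r * K) ≤ R) (hmR : r * m + 1 ≤ R)
    {x y : G} (hxy : f x = f y) : wordDist S x y ≤ r := by
  obtain ⟨step, hstep⟩ := exists_isEdgeLifting hf
  obtain ⟨u, hu⟩ := hS.exists_wordProd_eq (x⁻¹ * y)
  obtain ⟨w, hw, hsheet⟩ := exists_sameSheet_pathTransport hS hT hf hrR hmR hstep x u
  rw [hu, mul_inv_cancel_left, ← hxy] at hw hsheet
  have hloop : wordProd T w = wordProd T [] := by simpa using hw
  have hmonodromy : SameSheet S T m r f (f x) x (pathTransport step (f x) w x) := by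
    simpa [pathTransport] using sameSheet_pathTransport_of_wordProd_eq hS hf hrR hstep hK hKR
      hloop.symm (h := f x) (g := x) (by simp)
  exact (hmonodromy.trans hS hf hrR hsheet).2.2

end LocalQuasiIsometry

section SubshiftOfFiniteType

variable {G A : Type*} [Group G]

lemma isSFT_of_dependsOn [Finite A] {B : Set G} (hB : B.Finite) {P : (G → A) → Prop}
    (hP : DependsOn P B) : IsSFT {σ : G → A | ∀ g, P fun x => σ (g * x)} := by
  let F : Finset G := hB.toFinset
  let Forbidden : Type _ := {p : ↥F → A // ∀ τ : G → A, P τ → ∃ x : ↥F, τ x ≠ p x}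
  obtain ⟨n, ⟨e⟩⟩ := Finite.exists_equiv_fin Forbidden
  refine ⟨Fin n, inferInstance, fun _ => F, fun i => (e.symm i).1, Set.ext fun σ => ?_⟩
  refine ⟨fun hσ g i => (e.symm i).2 _ (hσ g), fun hσ g => ?_⟩
  by_contra hg
  have hforbidden : ∀ τ : G → A, P τ → ∃ x : ↥F, τ x ≠ σ (g * x) := by
    intro τ hτ
    by_contra! heq
    have hτσ : P τ = P fun x => σ (g * x) := hP fun x hx => heq ⟨x, hB.mem_toFinset.2 hx⟩
    exact hg (hτσ ▸ hτ)
  obtain ⟨x, hx⟩ := hσ g (e ⟨_, hforbidden⟩)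
  simp at hx

theorem exists_finiteIndex_shiftStab_of_dependsOn [Finite A] (hG : ¬ HasWeaklyAperiodicSFT G)
    {B : Set G} (hB : B.Finite) {P : (G → A) → Prop} (hP : DependsOn P B) {σ₀ : G → A}
    (hσ₀ : ∀ g, P fun x => σ₀ (g * x)) :
    ∃ σ : G → A, (∀ g, P fun x => σ (g * x)) ∧ (shiftStab σ).FiniteIndex := by
  obtain ⟨n, ⟨e⟩⟩ := Finite.exists_equiv_fin A
  have hsft : IsSFT {σ : G → Fin n | ∀ g, P fun x => e.symm (σ (g * x))} :=
    isSFT_of_dependsOn (P := fun σ => P fun x => e.symm (σ x)) hB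
      fun σ σ' h => hP fun x hx => congrArg e.symm (h x hx)
  by_contra! hinf
  refine hG ⟨Fin n, inferInstance, _, hsft, ⟨e ∘ σ₀, by simpa using hσ₀⟩, fun σ hσ => ?_⟩
  by_contra hindex
  have hle : shiftStab σ ≤ shiftStab (e.symm ∘ σ) := fun g hg x => congrArg e.symm (hg x)
  have : (shiftStab σ).FiniteIndex := ⟨hindex⟩
  exact hinf (e.symm ∘ σ) hσ (Subgroup.finiteIndex_of_le hle)

end SubshiftOfFiniteType

section Rigidity

variable {G H : Type*} [Group G] [Group H] {S : Finset G} {T : Finset H} {m r R : ℕ}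

/-- The labelling `l` of the edges of the Cayley graph of `G` by elements of `H` looks, on the
ball of radius `R` around `g`, like the displacements of a map `f` that locally looks like a
quasi-isometry. The map `f` and the base point `k` where it is read may vary with `g`. -/
def IsLocalQILabelling (S : Finset G) (T : Finset H) (m r R : ℕ) (l : G → ↥S → H) (g : G) : Prop :=
  ∃ (f : G → H) (k : G), IsLocalQIAt S T m r R f k ∧
    ∀ x, wordDist S 1 x ≤ R → ∀ s : ↥S, l (g * x) s = displacement f (k * x) s

theorem exists_isLocalQILabelling_finiteIndex (hS : IsSymmGenerating S) (hT : IsSymmGenerating T)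
    (hG : ¬ HasWeaklyAperiodicSFT G) {f : G → H} (hf : ∀ g, IsLocalQIAt S T m r R f g) :
    ∃ l : G → ↥S → H, (∀ g, IsLocalQILabelling S T m r R l g) ∧ (shiftStab l).FiniteIndex := by
  let A : Type _ := ↥S → {h : H | wordDist T 1 h ≤ m}
  have : Finite {h : H | wordDist T 1 h ≤ m} := (hT.finite_setOf_wordDist_le 1 m).to_subtype
  let label : (G → A) → G → ↥S → H := fun σ x s => σ x s
  let P : (G → A) → Prop := fun σ => IsLocalQILabelling S T m r R (label σ) 1
  have hP : DependsOn P {x | wordDist S 1 x ≤ R} := by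
    intro σ σ' hσ
    have hlabel : ∀ x, wordDist S 1 x ≤ R → label σ x = label σ' x := fun x hx =>
      funext fun s => congrArg (fun a : A => (a s : H)) (hσ x hx)
    simp +contextual only [P, IsLocalQILabelling, one_mul, hlabel]
  have hshort : ∀ g, ∀ s : ↥S, wordDist T 1 (displacement f g s) ≤ m := fun g s => by
    simpa [displacement] using (hT.wordDist_mul_left (f g)⁻¹ (f g) _).trans_le
      ((hf g).lipschitz s s.2)
  obtain ⟨σ, hσ, hindex⟩ := exists_finiteIndex_shiftStab_of_dependsOn hG
    (hS.finite_setOf_wordDist_le 1 R) hP (σ₀ := fun g s => ⟨displacement f g s, hshort g s⟩)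
    fun g => ⟨f, g, hf g, fun x _ s => by simp [label]⟩
  have hle : shiftStab σ ≤ shiftStab (label σ) := fun g hg x =>
    funext fun s => congrArg (fun a : A => (a s : H)) (hg x)
  refine ⟨label σ, fun g => ?_, Subgroup.finiteIndex_of_le hle⟩
  obtain ⟨f', k, hf', hl⟩ := hσ g
  exact ⟨f', k, hf', by simpa [label] using hl⟩

theorem PresentedBy.exists_isLocalQIAt_of_isLocalQILabelling {K : ℕ} (hK : PresentedBy S K)
    (hS : IsSymmGenerating S) (hT : IsSymmGenerating T) (hR : 1 ≤ R) (hrR : r ≤ R) (hKR : K ≤ R)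
    {l : G → ↥S → H} (hl : ∀ g, IsLocalQILabelling S T m r R l g) :
    ∃ f : G → H, f 1 = 1 ∧ (∀ g (s : ↥S), displacement f g s = l g s) ∧
      ∀ g, IsLocalQIAt S T m r R f g := by
  obtain ⟨f, hf1, hfl⟩ := hK.exists_displacement_eq hS fun g =>
    let ⟨f', k, _, hl'⟩ := hl g
    ⟨f', k, fun x hx => hl' x (hx.trans hKR)⟩
  refine ⟨f, hf1, hfl, fun g => ?_⟩
  obtain ⟨f', k, hf', hl'⟩ := hl g
  exact hf'.of_displacement_eqOn hS hT hR hrR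
    (displacement_eqOn_of_generators hS fun x hx s => (hfl _ s).trans (hl' x hx s))

lemma apply_mul_of_mem_shiftStab (hS : IsSymmGenerating S) {l : G → ↥S → H} {f : G → H}
    (hf1 : f 1 = 1) (hfl : ∀ g (s : ↥S), displacement f g s = l g s) {g : G}
    (hg : g ∈ shiftStab l) (x : G) : f (g * x) = f g * f x := by
  have heq : Set.EqOn (displacement f g) (displacement f 1) {u | wordDist S 1 u ≤ wordDist S 1 x} :=
    displacement_eqOn_of_generators hS fun y _ s => by
      rw [hfl, hfl, one_mul, hg y]
  simpa [displacement, hf1, inv_mul_eq_iff_eq_mul] using heq (le_refl (wordDist S 1 x))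

lemma finiteIndex_of_finite_of_forall_exists_mul_mem {P : Subgroup H} {D : Set H} (hD : D.Finite)
    (hPD : ∀ h, ∃ p ∈ P, p * h ∈ D) : P.FiniteIndex := by
  have := hD.to_subtype
  have hsurj : Function.Surjective fun d : ↥D => ((d⁻¹ : H) : H ⧸ P) := by
    intro q
    obtain ⟨h, rfl⟩ := QuotientGroup.mk_surjective q
    obtain ⟨p, hp, hd⟩ := hPD h⁻¹
    exact ⟨⟨_, hd⟩, QuotientGroup.eq.2 (by simpa using hp)⟩
  have := Finite.of_surjective _ hsurj
  exact Subgroup.finiteIndex_of_finite_quotient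

theorem finiteIndex_range_of_equivariant (hT : IsSymmGenerating T) {f : G → H} {G₀ : Subgroup G}
    [G₀.FiniteIndex] {φ : G₀ →* H} (hφ : ∀ (g : G₀) (x : G), f (g * x) = φ g * f x)
    (hf : ∀ h, ∃ g, wordDist T (f g) h ≤ m) : φ.range.FiniteIndex := by
  obtain ⟨C, hC, -⟩ := G₀.exists_isComplement_right 1
  refine finiteIndex_of_finite_of_forall_exists_mul_mem
    (hC.finite_right.biUnion fun c _ => hT.finite_setOf_wordDist_le (f c) m) fun h => ?_
  obtain ⟨g, hg⟩ := hf h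
  obtain ⟨g₀, hg₀, c, hc, rfl⟩ := hC.mul_eq.ge (Set.mem_univ g)
  have hfc : f (g₀ * c) = φ ⟨g₀, hg₀⟩ * f c := hφ ⟨g₀, hg₀⟩ c
  have hdist : wordDist T (f c) (φ ⟨g₀, hg₀⟩⁻¹ * h) = wordDist T (f (g₀ * c)) h := by
    rw [hfc, ← hT.wordDist_mul_left (φ ⟨g₀, hg₀⟩), map_inv, mul_inv_cancel_left]
  exact ⟨φ ⟨g₀, hg₀⟩⁻¹, ⟨_, rfl⟩, Set.mem_biUnion hc (hdist.trans_le hg)⟩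

lemma finite_ker_of_equivariant (hS : IsSymmGenerating S) {f : G → H} {G₀ : Subgroup G}
    {φ : G₀ →* H} (hφ : ∀ (g : G₀) (x : G), f (g * x) = φ g * f x)
    (hf : ∀ x y, f x = f y → wordDist S x y ≤ r) : Finite φ.ker := by
  have hker : ∀ g : φ.ker, wordDist S 1 (g : G₀) ≤ r := fun g =>
    hf _ _ (by simpa [MonoidHom.mem_ker.1 g.2] using (hφ g 1).symm)
  have hinj : Function.Injective fun g : φ.ker => ((g : G₀) : G) :=
    Subtype.val_injective.comp Subtype.val_injective
  exact Set.finite_univ_iff.1 <|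
    ((hS.finite_setOf_wordDist_le 1 r).preimage hinj.injOn).subset fun g _ => hker g

end Rigidity

/-- if `G` is finitely presented with no weakly aperiodic SFT and `H` is a
finitely presented group quasi-isometric to `G`, then some finite-index subgroup of `H` is
isomorphic to the quotient of a finite-index subgroup of `G` by a finite normal subgroup. -/
theorem stmt3 {G H : Type*} [Group G] [Group H] (S : Finset G) (T : Finset H)
    (hSsym : ∀ s ∈ S, s⁻¹ ∈ S) (hSgen : Subgroup.closure (S : Set G) = ⊤)
    (hTsym : ∀ t ∈ T, t⁻¹ ∈ T) (hTgen : Subgroup.closure (T : Set H) = ⊤)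
    (hGfp : ∃ K : ℕ, PresentedBy S K) (hHfp : ∃ K : ℕ, PresentedBy T K)
    (hGnowa : ¬ HasWeaklyAperiodicSFT G)
    (hqi : ∃ f : G → H, IsQI (S : Set G) (T : Set H) f) :
    ∃ (G₀ : Subgroup G) (H₀ : Subgroup H), G₀.FiniteIndex ∧ H₀.FiniteIndex ∧
      -- `H₀` is isomorphic to the quotient of `G₀` by the finite normal subgroup `K`:
      -- there is a surjective homomorphism `G₀ →* H₀` with kernel `K`.
      ∃ K : Subgroup G₀, K.Normal ∧ Finite K ∧
        ∃ φ : G₀ →* H₀, Function.Surjective φ ∧ φ.ker = K := by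
  have hS : IsSymmGenerating S := ⟨hSsym, hSgen⟩
  have hT : IsSymmGenerating T := ⟨hTsym, hTgen⟩
  obtain ⟨K, hK⟩ := hGfp
  obtain ⟨L, hL⟩ := hHfp
  obtain ⟨f₀, hf₀⟩ := hqi
  obtain ⟨m, r, hf₀⟩ := hf₀.exists_isLocalQIAt hT
  let R := K + 3 * r + 2 * (r * L) + (r * m + 1)
  obtain ⟨l, hl, hindex⟩ := exists_isLocalQILabelling_finiteIndex hS hT hGnowa (hf₀ R)
  obtain ⟨f, hf1, hfl, hf⟩ := hK.exists_isLocalQIAt_of_isLocalQILabelling hS hT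
    (by omega) (by omega) (by omega) hl
  have hequiv : ∀ (g : shiftStab l) x, f (g * x) = f g * f x := fun g =>
    apply_mul_of_mem_shiftStab hS hf1 hfl g.2
  let φ : shiftStab l →* H := .mk' (fun g => f g) fun g g' => hequiv g g'
  have hrange : φ.range.FiniteIndex := finiteIndex_range_of_equivariant hT hequiv
    (exists_wordDist_le_of_forall_isLocalQIAt hS hT hf)
  have hker : Finite φ.ker := finite_ker_of_equivariant hS hequiv fun _ _ =>
    wordDist_le_of_apply_eq_of_forall_isLocalQIAt hS hT hf hL
      (by omega) (by omega) (by omega)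
  exact ⟨shiftStab l, φ.range, hindex, hrange, φ.ker, inferInstance, hker, φ.rangeRestrict,
    φ.rangeRestrict_surjective, φ.ker_rangeRestrict⟩
end
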